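/- arXiv:1903.09145 — 6 statements merged into one kernel-verified Lean document; each statement's English description precedes it below -/
import Mathlib

section
/- Let f : ℝⁿ → ℝⁿ be locally Lipschitz with f(0) = 0, and let Ψ : ℝⁿ → ℝ be continuously differentiable with Ψ(0) = 0, Ψ(x) > 0 for all x ≠ 0, Ψ radially unbounded (Ψ(x) → ∞ as |x| → ∞), and ⟨∇Ψ(x), f(x)⟩ < 0 for all x ≠ 0. Then the origin is globally asymptotically stable for ẋ = f(x): (i) for every ν > 0 there exists ε > 0 such that every differentiable solution x : [0,∞) → ℝⁿ of x'(t) = f(x(t)) with |x(0)| ≤ ε satisfies |x(t)| ≤ ν for all t ≥ 0; and (ii) every differentiable solution x : [0,∞) → ℝⁿ of x'(t) = f(x(t)) satisfies |x(t)| → 0 as t → ∞. -/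
/-!
Along a solution, `t ↦ Ψ (x t)` has derivative `⟪∇Ψ (x t), f (x t)⟫ ≤ 0`, so `Ψ (x t)` is
nonincreasing. Radial unboundedness and compactness of closed annuli show that small values of `Ψ`
force small norms (`exists_lt_imp_norm_lt`): for each `ν > 0` there is `c > 0` such that
`Ψ y < c` implies `‖y‖ < ν`. Stability follows from continuity of `Ψ` at the origin.

For attractivity it is enough that `Ψ (x t)` eventually drops below `c`. Otherwise the solution
stays in the compact set `{c ≤ Ψ ≤ Ψ (x 0)}`, which avoids the origin, so the continuous function
`⟪∇Ψ, f⟫` is bounded above by some `-m < 0` there. Then `Ψ (x t) ≤ Ψ (x 0) - m t`, which eventually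
contradicts `Ψ ≥ c`.
-/

open scoped RealInnerProductSpace

/-- The chain rule along a trajectory, in gradient form. -/
lemma hasDerivAt_comp_gradient {n : ℕ} {Ψ : EuclideanSpace ℝ (Fin n) → ℝ} (hΨc : ContDiff ℝ 1 Ψ)
    {x : ℝ → EuclideanSpace ℝ (Fin n)} {v : EuclideanSpace ℝ (Fin n)} {t : ℝ}
    (hx : HasDerivAt x v t) :
    HasDerivAt (fun s => Ψ (x s)) ⟪gradient Ψ (x t), v⟫ t := by
  have h := ((hΨc.differentiable one_ne_zero) (x t)).hasGradientAt.hasFDerivAt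
  exact h.comp_hasDerivAt t hx

lemma sub_le_mul_of_hasDerivAt_le {g g' : ℝ → ℝ} {C : ℝ}
    (hg : ∀ t, 0 ≤ t → HasDerivAt g (g' t) t) (hC : ∀ t, 0 ≤ t → g' t ≤ C)
    {s t : ℝ} (hs : 0 ≤ s) (hst : s ≤ t) : g t - g s ≤ C * (t - s) := by
  refine (convex_Ici (0 : ℝ)).image_sub_le_mul_sub_of_deriv_le
    (fun u hu => (hg u hu).continuousAt.continuousWithinAt)
    (fun u hu => (hg u (interior_subset hu)).differentiableAt.differentiableWithinAt)
    (fun u hu => ?_) s hs t (hs.trans hst) hst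
  rw [(hg u (interior_subset hu)).deriv]
  exact hC u (interior_subset hu)

/-- A continuous, positive definite, radially unbounded function is bounded below by a positive
constant away from the origin. -/
lemma exists_lt_imp_norm_lt {n : ℕ} {Ψ : EuclideanSpace ℝ (Fin n) → ℝ} (hΨ : Continuous Ψ)
    (hΨpos : ∀ x : EuclideanSpace ℝ (Fin n), x ≠ 0 → 0 < Ψ x)
    (hΨrad : ∀ M : ℝ, ∃ R : ℝ, ∀ x : EuclideanSpace ℝ (Fin n), R ≤ ‖x‖ → M ≤ Ψ x)
    {ν : ℝ} (hν : 0 < ν) : ∃ c > 0, ∀ y, Ψ y < c → ‖y‖ < ν := by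
  obtain ⟨R, hR⟩ := hΨrad 1
  have hK : IsCompact (Metric.closedBall (0 : EuclideanSpace ℝ (Fin n)) R ∩ {y | ν ≤ ‖y‖}) :=
    (isCompact_closedBall 0 R).inter_right (isClosed_le continuous_const continuous_norm)
  obtain ⟨m, hm, hmK⟩ := hK.exists_forall_le' (a := 0) hΨ.continuousOn
    (fun y hy => hΨpos y (norm_pos_iff.mp (hν.trans_le hy.2)))
  refine ⟨min 1 m, lt_min one_pos hm, fun y hy => ?_⟩
  by_contra! hyν
  rcases le_total R ‖y‖ with h | h
  · exact absurd (hR y h) (not_le.mpr (hy.trans_le (min_le_left _ _)))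
  · exact absurd (hmK y ⟨by simpa using h, hyν⟩) (not_le.mpr (hy.trans_le (min_le_right _ _)))

/-- **Lyapunov / Barbashin–Krasovskii theorem.** If `f : ℝⁿ → ℝⁿ` is locally Lipschitz with
`f 0 = 0` and there is a continuously differentiable, radially unbounded, positive definite
Lyapunov function `Ψ` whose derivative along `f` is negative definite, then the origin is
globally asymptotically stable. -/
theorem stmt_0 {n : ℕ}
    (f : EuclideanSpace ℝ (Fin n) → EuclideanSpace ℝ (Fin n))
    (hf : LocallyLipschitz f) (hf0 : f 0 = 0)
    (Ψ : EuclideanSpace ℝ (Fin n) → ℝ)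
    (hΨc : ContDiff ℝ 1 Ψ) (hΨ0 : Ψ 0 = 0)
    (hΨpos : ∀ x : EuclideanSpace ℝ (Fin n), x ≠ 0 → 0 < Ψ x)
    (hΨrad : ∀ M : ℝ, ∃ R : ℝ, ∀ x : EuclideanSpace ℝ (Fin n), R ≤ ‖x‖ → M ≤ Ψ x)
    (hdec : ∀ x : EuclideanSpace ℝ (Fin n), x ≠ 0 → ⟪gradient Ψ x, f x⟫ < 0) :
    (∀ ν > (0 : ℝ), ∃ ε > (0 : ℝ), ∀ x : ℝ → EuclideanSpace ℝ (Fin n),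
      (∀ t : ℝ, 0 ≤ t → HasDerivAt x (f (x t)) t) →
      ‖x 0‖ ≤ ε → ∀ t : ℝ, 0 ≤ t → ‖x t‖ ≤ ν) ∧
    (∀ x : ℝ → EuclideanSpace ℝ (Fin n),
      (∀ t : ℝ, 0 ≤ t → HasDerivAt x (f (x t)) t) →
      Filter.Tendsto (fun t => ‖x t‖) Filter.atTop (nhds 0)) := by
  have hΨ := hΨc.continuous
  have hnonpos : ∀ y, ⟪gradient Ψ y, f y⟫ ≤ 0 := by
    intro y
    rcases eq_or_ne y 0 with rfl | hy
    · simp [hf0]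
    · exact (hdec y hy).le
  have hmono : ∀ x : ℝ → EuclideanSpace ℝ (Fin n),
      (∀ t : ℝ, 0 ≤ t → HasDerivAt x (f (x t)) t) →
      ∀ s t : ℝ, 0 ≤ s → s ≤ t → Ψ (x t) ≤ Ψ (x s) := by
    intro x hx s t hs hst
    have := sub_le_mul_of_hasDerivAt_le (fun t ht => hasDerivAt_comp_gradient hΨc (hx t ht))
      (fun t _ => hnonpos (x t)) hs hst
    linarith
  constructor
  · intro ν hν
    obtain ⟨c, hc, hcν⟩ := exists_lt_imp_norm_lt hΨ hΨpos hΨrad hν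
    have hev : ∀ᶠ y in nhds 0, Ψ y < c := hΨ.continuousAt.eventually_lt_const (by rwa [hΨ0])
    obtain ⟨ε, hε, hball⟩ := Metric.nhds_basis_closedBall.eventually_iff.mp hev
    refine ⟨ε, hε, fun x hx hx0 t ht => (hcν _ ?_).le⟩
    exact (hmono x hx 0 t le_rfl ht).trans_lt (hball (by simpa using hx0))
  · intro x hx
    rw [Metric.tendsto_atTop]
    intro ν hν
    obtain ⟨c, hc, hcν⟩ := exists_lt_imp_norm_lt hΨ hΨpos hΨrad hν
    obtain ⟨T, hT, hTc⟩ : ∃ T, 0 ≤ T ∧ Ψ (x T) < c := by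
      by_contra! hge
      have hgrad : Continuous (gradient Ψ) :=
        (InnerProductSpace.toDual ℝ _).symm.continuous.comp (hΨc.continuous_fderiv one_ne_zero)
      have hdot : Continuous fun y => -⟪gradient Ψ y, f y⟫ := (hgrad.inner hf.continuous).neg
      obtain ⟨R, hR⟩ := hΨrad (Ψ (x 0) + 1)
      have hK : IsCompact {y | c ≤ Ψ y ∧ Ψ y ≤ Ψ (x 0)} := by
        refine (isCompact_closedBall (0 : EuclideanSpace ℝ (Fin n)) R).of_isClosed_subset
          ((isClosed_le continuous_const hΨ).inter (isClosed_le hΨ continuous_const)) ?_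
        rintro y ⟨-, hy⟩
        rw [mem_closedBall_zero_iff]
        by_contra! h
        linarith [hR y h.le]
      obtain ⟨m, hm, hmK⟩ := hK.exists_forall_le' (a := 0) hdot.continuousOn (by
        rintro y ⟨hy, -⟩
        have hy0 : y ≠ 0 := by
          rintro rfl
          linarith
        exact neg_pos.mpr (hdec y hy0))
      have hdecay : ∀ t, 0 ≤ t → Ψ (x t) - Ψ (x 0) ≤ -m * (t - 0) := fun t ht =>
        sub_le_mul_of_hasDerivAt_le (fun t ht => hasDerivAt_comp_gradient hΨc (hx t ht))
          (fun t ht => le_neg_of_le_neg (hmK (x t) ⟨hge t ht, hmono x hx 0 t le_rfl ht⟩))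
          le_rfl ht
      -- At time `Ψ (x 0) / m` the linear upper bound for `Ψ` has reached zero.
      have h0 : 0 ≤ Ψ (x 0) / m := div_nonneg (hc.le.trans (hge 0 le_rfl)) hm.le
      have h1 := hdecay _ h0
      have h2 : m * (Ψ (x 0) / m) = Ψ (x 0) := mul_div_cancel₀ _ hm.ne'
      linarith [hge _ h0]
    refine ⟨T, fun t ht => ?_⟩
    simpa using hcν _ ((hmono x hx T t hT ht).trans_lt hTc)
end

section
/- Let k₁, …, kₘ be real polynomials in n variables, let K = {x ∈ ℝⁿ : k₁(x) ≥ 0, …, kₘ(x) ≥ 0} be compact, and set k₀ = 1. Call a polynomial σ a sum of squares (SOS) if there exist finitely many polynomials h₁, …, hₛ with σ = Σᵢ hᵢ². Let Q = { Σ_{j=0}^{m} σⱼ·kⱼ : each σⱼ is SOS } be the quadratic module generated by k₁, …, kₘ. Suppose there exists μ ∈ Q such that the set {x ∈ ℝⁿ : μ(x) ≥ 0} is compact. Then every real polynomial p in n variables satisfying p(x) > 0 for all x ∈ K belongs to Q, i.e., there exist SOS polynomials σ₀, σ₁, …, σₘ with p = σ₀ + Σ_{j=1}^{m} σⱼ·kⱼ.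 -/
/-!
The proof is algebraic, in the style of Schmüdgen and Wörmann, and rests on a Positivstellensatz
for two constraints, `exists_certificate`: if `f < 0` on `{g ≥ 0}`, then `-1 = t₁ + f t` with `t₁` and
`t` in the preordering `Σ + g Σ`, where `Σ` denotes the sums of squares. Note that `Σ + g Σ` is closed
under products, and that it lies in the quadratic module `Q` whenever `g ∈ Q`.

* If there is no such certificate, the preordering generated by `g` and `f` is proper. By
  `exists_hom_nonneg` it is nonnegative under a homomorphism to an ordered field `R` in which
  polynomials have the intermediate value property: a maximal proper cone containing it has prime
  support, and a maximal proper cone in the algebraic closure of the residue field, containing the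
  induced one, orders the field of its differences. The images of the variables are a point of `R ^ n`
  with `g ≥ 0` and `f ≥ 0`.
* By `exists_point_of_sameSign` there is then such a point in `ℝ ^ n` too. This is a weak form of the
  Tarski transfer principle. Any ring with sign-preserving maps to `R` and to `ℝ` can be enlarged until
  it contains the roots of all its polynomials (`Saturated.root_mem`), and then a coordinate in `R` is
  approximated by elements of the ring. Ultrapowers carry the induction on the number of coordinates.
* If `{μ ≥ 0}` is compact, `S = ∑ xᵢ²` is less than some `N` there, and the certificate reads
  `-1 = t₁ + (S - N) t`. Hence `N - S + N t₁ = (N - S)² t + t₁ S` lies in `Σ + μ Σ`, so bounding `t₁`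
  by a constant modulo `Σ + μ Σ` gives `N' - S ∈ Σ + μ Σ ⊆ Q` (`exists_ball_mem_sosCone`). The
  preordering generated by `N - S` is Archimedean (`exists_bound_mem_sosCone`), so it contains some
  `m - t₁ = σ + (N - S) τ`. Since `(1 + t₁)(N - S) = (N - S)² t`, multiplication by `1 + t₁` yields
  `(1 + t₁)(m - t₁) ∈ Σ + μ Σ`, and completing the square gives the bound.
* A polynomial positive on the ball `{S ≤ N'}` lies in `Σ + (N' - S) Σ`: by the Archimedean property
  `r + f` lies there for some constant `r`, and a certificate lowers `r` to `0` in finitely many equal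
  steps (`mem_sosCone_of_pos_on_ball`).
* Subtracting from `p` suitable elements `λ (1 - c kⱼ) ^ (2 r) kⱼ` of `Q` leaves a polynomial positive on
  the whole ball (`exists_pos_on_compact`), to which the previous step applies.
-/

/-- A multivariate real polynomial is a *sum of squares* (SOS) if it is a finite sum of
squares of polynomials. -/
def IsSOS {n : ℕ} (σ : MvPolynomial (Fin n) ℝ) : Prop :=
  ∃ (s : ℕ) (h : Fin s → MvPolynomial (Fin n) ℝ), σ = ∑ i, (h i) ^ 2

section
open Polynomial

/-! ### Polynomials with the intermediate value property -/

/-- The intermediate value property for polynomials over the ordered field `U`: a polynomial with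
values of opposite signs at `a < b` has a root strictly between `a` and `b`. -/
def PolyIVT (U : Type) [Field U] [LinearOrder U] : Prop :=
  ∀ (p : U[X]) (a b : U), a < b → p.eval a * p.eval b < 0 → ∃ c, a < c ∧ c < b ∧ p.eval c = 0

section IVT
variable {U : Type} [Field U] [LinearOrder U] [IsStrictOrderedRing U]

theorem PolyIVT.mul_pos_of_no_root (hU : PolyIVT U) (p : U[X]) {a b : U} (hab : a ≤ b)
    (h : ∀ x, a ≤ x → x ≤ b → p.eval x ≠ 0) : 0 < p.eval a * p.eval b := by
  rcases hab.eq_or_lt with rfl | hlt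
  · exact mul_self_pos.2 (h a le_rfl le_rfl)
  · by_contra hn
    have hne : p.eval a * p.eval b ≠ 0 := mul_ne_zero (h a le_rfl hab) (h b hab le_rfl)
    obtain ⟨c, h1, h2, h3⟩ := hU p a b hlt (lt_of_le_of_ne (not_lt.1 hn) hne)
    exact h c h1.le h2.le h3

/-- Rolle's theorem from the intermediate value property alone. Between consecutive roots, write
`p` as `(X - a) ^ (m + 1) * (X - b) ^ (n + 1) * q` with `q` of constant sign; up to the powers of
`X - a` and `X - b`, the derivative is then a polynomial that changes sign. -/
theorem PolyIVT.rolle (hU : PolyIVT U) (p : U[X]) (hp : p ≠ 0) {a b : U} (hab : a < b)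
    (ha : p.eval a = 0) (hb : p.eval b = 0) :
    ∃ c, a < c ∧ c < b ∧ (derivative p).eval c = 0 := by
  classical
  -- pass to the first root after `a`
  let S := p.roots.toFinset.filter (fun x => a < x ∧ x ≤ b)
  have hS : S.Nonempty := ⟨b, by simp [S, hp, hb, hab]⟩
  obtain ⟨b', hb'S, hmin⟩ := S.exists_min_image id hS
  have hb' : p.eval b' = 0 ∧ a < b' ∧ b' ≤ b := by simpa [S, hp] using hb'S
  obtain ⟨hb'0, hab', hb'b⟩ := hb'
  have hno : ∀ x, a < x → x < b' → p.eval x ≠ 0 := by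
    intro x h1 h2 h3
    have : x ∈ S := by simp [S, hp, h3, h1, (h2.trans_le hb'b).le]
    exact absurd (hmin x this) (not_le.2 h2)
  obtain ⟨u, hu, hua⟩ := exists_eq_pow_rootMultiplicity_mul_and_not_dvd p hp a
  have hu0 : u ≠ 0 := by rintro rfl; simp at hua
  obtain ⟨q, hq, hqb⟩ := exists_eq_pow_rootMultiplicity_mul_and_not_dvd u hu0 b'
  have hm : 0 < p.rootMultiplicity a := (rootMultiplicity_pos hp).2 ha
  have hub : u.eval b' = 0 := by
    have := hb'0
    rw [hu] at this
    simpa [sub_ne_zero.2 hab'.ne', hm.ne'] using this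
  have hn : 0 < u.rootMultiplicity b' := (rootMultiplicity_pos hu0).2 hub
  obtain ⟨m, hm'⟩ := Nat.exists_eq_succ_of_ne_zero hm.ne'
  obtain ⟨n, hn'⟩ := Nat.exists_eq_succ_of_ne_zero hn.ne'
  rw [hm'] at hu
  rw [hn'] at hq
  rw [dvd_iff_isRoot, IsRoot.def] at hua hqb
  have hqno : ∀ x, a ≤ x → x ≤ b' → q.eval x ≠ 0 := by
    intro x h1 h2 h3
    rcases h2.eq_or_lt with rfl | h2
    · exact hqb h3
    rcases h1.eq_or_lt with rfl | h1
    · exact hua (by rw [hq]; simp [h3])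
    · exact hno x h1 h2 (by rw [hu, hq]; simp [h3])
  have hqpos := hU.mul_pos_of_no_root q hab'.le hqno
  let h : U[X] := C ((m : U) + 1) * (X - C b') * q + C ((n : U) + 1) * (X - C a) * q
    + (X - C a) * (X - C b') * derivative q
  have hder : derivative p = (X - C a) ^ m * (X - C b') ^ n * h := by
    rw [hu, hq]
    simp only [h, Nat.succ_eq_add_one, derivative_mul, derivative_X_sub_C_pow, map_add, map_one,
      map_natCast, Nat.add_sub_cancel, Nat.cast_add, Nat.cast_one]
    ring
  have hh : h.eval a * h.eval b' < 0 := by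
    have e : h.eval a * h.eval b' =
        -((m + 1) * (n + 1) * (b' - a) ^ 2 * (q.eval a * q.eval b')) := by
      simp [h]; ring
    have : 0 < b' - a := sub_pos.2 hab'
    rw [e]
    have : (0:U) < (m + 1) * (n + 1) * (b' - a) ^ 2 * (q.eval a * q.eval b') := by positivity
    linarith
  obtain ⟨c, h1, h2, h3⟩ := hU h a b' hab' hh
  exact ⟨c, h1, h2.trans_le hb'b, by rw [hder]; simp [h3]⟩

/-- If `p` has a root `α` in `(lo, hi)` and no critical point there, then on `[lo, hi]` it has the
sign of `p.eval hi` to the right of `α` and the opposite sign to the left. -/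
theorem PolyIVT.sign_change (hU : PolyIVT U) (p : U[X]) (hp : p ≠ 0) {lo α hi : U}
    (h1 : lo < α) (h2 : α < hi) (hα : p.eval α = 0)
    (hd : ∀ x, lo < x → x < hi → (derivative p).eval x ≠ 0) {x : U} (hx1 : lo ≤ x) (hx2 : x ≤ hi) :
    (x < α → p.eval x * p.eval hi < 0) ∧ (α < x → 0 < p.eval x * p.eval hi) := by
  have huniq : ∀ y, lo ≤ y → y ≤ hi → p.eval y = 0 → y = α := by
    intro y hy1 hy2 hy
    rcases lt_trichotomy y α with h | h | h
    · obtain ⟨c, c1, c2, c3⟩ := hU.rolle p hp h hy hα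
      exact absurd c3 (hd c (hy1.trans_lt c1) (c2.trans h2))
    · exact h
    · obtain ⟨c, c1, c2, c3⟩ := hU.rolle p hp h hα hy
      exact absurd c3 (hd c (h1.trans c1) (c2.trans_le hy2))
  obtain ⟨q, hq⟩ := dvd_iff_isRoot.2 (show p.IsRoot α from hα)
  have hqα : q.eval α ≠ 0 := by
    have := hd α h1 h2
    rw [hq] at this
    simpa using this
  have hqno : ∀ y, lo ≤ y → y ≤ hi → q.eval y ≠ 0 := by
    intro y hy1 hy2 hy
    have := huniq y hy1 hy2 (by rw [hq]; simp [hy])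
    exact hqα (this ▸ hy)
  have hpos := hU.mul_pos_of_no_root q hx2 (fun y hy => hqno y (hx1.trans hy))
  have e : p.eval x * p.eval hi = (x - α) * ((hi - α) * (q.eval x * q.eval hi)) := by
    rw [hq]; simp; ring
  have hpos2 : 0 < (hi - α) * (q.eval x * q.eval hi) := mul_pos (sub_pos.2 h2) hpos
  rw [e]
  exact ⟨fun h => mul_neg_of_neg_of_pos (sub_neg.2 h) hpos2,
    fun h => mul_pos (sub_pos.2 h) hpos2⟩

end IVT

theorem polyIVT_real : PolyIVT ℝ := by
  intro p a b hab h
  have hc : ContinuousOn (fun x => p.eval x) (Set.Icc a b) := p.continuous.continuousOn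
  rcases mul_neg_iff.1 h with ⟨h1, h2⟩ | ⟨h1, h2⟩
  · obtain ⟨c, hc, h⟩ := intermediate_value_Ioo' hab.le hc ⟨h2, h1⟩
    exact ⟨c, hc.1, hc.2, h⟩
  · obtain ⟨c, hc, h⟩ := intermediate_value_Ioo hab.le hc ⟨h1, h2⟩
    exact ⟨c, hc.1, hc.2, h⟩

/-! ### Homomorphisms to ordered fields agreeing on signs -/

/-- Two homomorphisms to ordered fields give every element of `k` the same sign. Positivity
suffices, because it can be applied to negatives. -/
def SameSign {k U R : Type} [CommRing k] [Field U] [LinearOrder U] [Field R] [LinearOrder R]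
    (i : k →+* U) (j : k →+* R) : Prop := ∀ z, 0 < i z ↔ 0 < j z

/-- A pair of homomorphisms that gives all elements of `k` the same sign, is injective, and cannot
be extended: a pair `(α, β)` at which every polynomial over `k` takes values of the same sign
already comes from an element of `k`. -/
structure Saturated {k U R : Type} [CommRing k] [Field U] [LinearOrder U] [Field R]
    [LinearOrder R] (i : k →+* U) (j : k →+* R) : Prop where
  sign : SameSign i j
  inj : Function.Injective i
  closed : ∀ α β, (∀ p : k[X], 0 < (p.map i).eval α ↔ 0 < (p.map j).eval β) →
    ∃ z, i z = α ∧ j z = β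

section
variable {k U R : Type} [CommRing k] [Field U] [LinearOrder U] [IsStrictOrderedRing U]
  [Field R] [LinearOrder R] [IsStrictOrderedRing R] {i : k →+* U} {j : k →+* R}

theorem SameSign.neg (h : SameSign i j) (z : k) : i z < 0 ↔ j z < 0 := by
  have := h (-z)
  simpa using this

theorem SameSign.lt (h : SameSign i j) (z w : k) : i z < i w ↔ j z < j w := by
  have := h (w - z)
  simpa using this

theorem SameSign.eq (h : SameSign i j) (z w : k) : i z = i w ↔ j z = j w := by
  have h1 := h.lt z w
  have h2 := h.lt w z
  constructor <;> intro h3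
  · rw [h3] at h1 h2
    exact le_antisymm (not_lt.1 (fun h => lt_irrefl _ (h2.2 h)))
      (not_lt.1 (fun h => lt_irrefl _ (h1.2 h)))
  · rw [h3] at h1 h2
    exact le_antisymm (not_lt.1 (fun h => lt_irrefl _ (h2.1 h)))
      (not_lt.1 (fun h => lt_irrefl _ (h1.1 h)))

theorem SameSign.le (h : SameSign i j) (z w : k) : i z ≤ i w ↔ j z ≤ j w := by
  rw [← not_lt, ← not_lt, h.lt]

theorem Saturated.symm (h : Saturated i j) : Saturated j i where
  sign z := (h.sign z).symm
  inj a b hab := h.inj ((h.sign.eq a b).2 hab)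
  closed α β hp := by
    obtain ⟨z, h1, h2⟩ := h.closed β α (fun p => (hp p).symm)
    exact ⟨z, h2, h1⟩

omit [LinearOrder U] [IsStrictOrderedRing U] in
theorem eval_inv_mul_pow (i : k →+* U) {z : k} (hz : i z ≠ 0) (p : k[X]) :
    (p.map i).eval (i z)⁻¹ * (i z) ^ p.natDegree =
      i (∑ m ∈ Finset.range (p.natDegree + 1), p.coeff m * z ^ (p.natDegree - m)) := by
  rw [eval_map, eval₂_eq_sum_range, Finset.sum_mul, map_sum]
  refine Finset.sum_congr rfl (fun m hm => ?_)
  rw [map_mul, map_pow, pow_sub₀ _ hz (Nat.lt_succ_iff.1 (Finset.mem_range.1 hm))]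
  ring

/-- The ring of a saturated pair is a field. -/
theorem Saturated.exists_inv (h : Saturated i j) (z : k) (hz : z ≠ 0) : ∃ w, z * w = 1 := by
  have hi : i z ≠ 0 := fun h0 => hz (h.inj (by simpa using h0))
  have hj : j z ≠ 0 := fun h0 => hz (h.symm.inj (by simpa using h0))
  -- clearing denominators by an even power of `z`
  have key : ∀ p : k[X], ∃ (n : ℕ) (g : k), (p.map i).eval (i z)⁻¹ * (i z) ^ n = i g ∧
      (p.map j).eval (j z)⁻¹ * (j z) ^ n = j g := fun p =>
    ⟨p.natDegree, _, eval_inv_mul_pow i hi p, eval_inv_mul_pow j hj p⟩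
  obtain ⟨w, hw, -⟩ := h.closed (i z)⁻¹ (j z)⁻¹ (by
    intro p
    obtain ⟨n, g, h1, h2⟩ := key p
    have e1 : (p.map i).eval (i z)⁻¹ * ((i z) ^ n) ^ 2 = i (g * z ^ n) := by
      rw [map_mul, ← h1, map_pow]; ring
    have e2 : (p.map j).eval (j z)⁻¹ * ((j z) ^ n) ^ 2 = j (g * z ^ n) := by
      rw [map_mul, ← h2, map_pow]; ring
    have p1 : 0 < ((i z) ^ n) ^ 2 := by positivity
    have p2 : 0 < ((j z) ^ n) ^ 2 := by positivity
    rw [← mul_pos_iff_of_pos_right p1, ← mul_pos_iff_of_pos_right p2, e1, e2]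
    exact h.sign _)
  exact ⟨w, h.inj (by simp [hw, hi])⟩

omit [IsStrictOrderedRing R] in
/-- Given finitely many elements of the image of `k`, all different from `t`, some element of `k`
lies on the same side of each of them as `t` does: a midpoint, or a point beyond all of them. -/
theorem exists_mem_same_side (A : Finset U) (t : U) (hA : ∀ a ∈ A, a ∈ Set.range i)
    (ht : t ∉ A) (h2 : ∃ w : k, 2 * w = 1) :
    ∃ z, ∀ a ∈ A, (a < i z ∧ a < t) ∨ (i z < a ∧ t < a) := by
  classical
  obtain ⟨w, hw⟩ := h2
  have hne : ∀ a ∈ A, a ≠ t := fun a ha h => ht (h ▸ ha)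
  have hw' : i w = 1 / 2 := by
    have := congrArg i hw
    rw [map_mul, map_one, map_ofNat] at this
    linarith
  by_cases hlo : (A.filter (· < t)).Nonempty
  · obtain ⟨lo, hlo1, hlo2⟩ := (A.filter (· < t)).exists_max_image id hlo
    rw [Finset.mem_filter] at hlo1
    obtain ⟨c, hc⟩ := hA lo hlo1.1
    by_cases hhi : (A.filter (t < ·)).Nonempty
    · obtain ⟨hi, hhi1, hhi2⟩ := (A.filter (t < ·)).exists_min_image id hhi
      rw [Finset.mem_filter] at hhi1
      obtain ⟨d, hd⟩ := hA hi hhi1.1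
      refine ⟨w * (c + d), fun a ha => ?_⟩
      have e : i (w * (c + d)) = (lo + hi) / 2 := by simp [hc, hd, hw']; ring
      have : lo < hi := hlo1.2.trans hhi1.2
      rw [e]
      rcases (hne a ha).lt_or_gt with h | h
      · have := hlo2 a (Finset.mem_filter.2 ⟨ha, h⟩)
        simp only [id] at this
        exact Or.inl ⟨by linarith, h⟩
      · have := hhi2 a (Finset.mem_filter.2 ⟨ha, h⟩)
        simp only [id] at this
        exact Or.inr ⟨by linarith, h⟩
    · refine ⟨c + 1, fun a ha => ?_⟩
      rcases (hne a ha).lt_or_gt with h | h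
      · have := hlo2 a (Finset.mem_filter.2 ⟨ha, h⟩)
        simp only [id] at this
        exact Or.inl ⟨by simp only [map_add, map_one, hc]; linarith, h⟩
      · exact absurd ⟨a, Finset.mem_filter.2 ⟨ha, h⟩⟩ hhi
  · by_cases hhi : (A.filter (t < ·)).Nonempty
    · obtain ⟨hi, hhi1, hhi2⟩ := (A.filter (t < ·)).exists_min_image id hhi
      rw [Finset.mem_filter] at hhi1
      obtain ⟨d, hd⟩ := hA hi hhi1.1
      refine ⟨d - 1, fun a ha => ?_⟩
      rcases (hne a ha).lt_or_gt with h | h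
      · exact absurd ⟨a, Finset.mem_filter.2 ⟨ha, h⟩⟩ hlo
      · have := hhi2 a (Finset.mem_filter.2 ⟨ha, h⟩)
        simp only [id] at this
        exact Or.inr ⟨by simp only [map_sub, map_one, hd]; linarith, h⟩
    · refine ⟨0, fun a ha => ?_⟩
      rcases (hne a ha).lt_or_gt with h | h
      · exact absurd ⟨a, Finset.mem_filter.2 ⟨ha, h⟩⟩ hlo
      · exact absurd ⟨a, Finset.mem_filter.2 ⟨ha, h⟩⟩ hhi

/-- The sign of `p` agrees at two points not separated by a root of `p`. -/
theorem PolyIVT.pos_iff_of_same_side (hU : PolyIVT U) (p : U[X]) {s t : U}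
    (h : ∀ a, p.eval a = 0 → (a < s ∧ a < t) ∨ (s < a ∧ t < a)) :
    0 < p.eval s ↔ 0 < p.eval t := by
  have key : ∀ s t : U, s ≤ t → (∀ a, p.eval a = 0 → (a < s ∧ a < t) ∨ (s < a ∧ t < a)) →
      0 < p.eval s * p.eval t := by
    intro s t hst h
    refine hU.mul_pos_of_no_root p hst (fun x h1 h2 h3 => ?_)
    rcases h x h3 with ⟨h4, -⟩ | ⟨-, h4⟩
    · exact absurd h4 (not_lt.2 h1)
    · exact absurd h4 (not_lt.2 h2)
  rcases le_total s t with hst | hst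
  · have := key s t hst h
    exact pos_iff_pos_of_mul_pos this
  · have := key t s hst (fun a ha => (h a ha).imp And.symm And.symm)
    exact (pos_iff_pos_of_mul_pos this).symm
end

/-! ### Saturated pairs contain all roots -/

section
variable {k U R : Type} [CommRing k] [Field U] [LinearOrder U] [IsStrictOrderedRing U]
  [Field R] [LinearOrder R] [IsStrictOrderedRing R] {i : k →+* U} {j : k →+* R}

/-- The roots of a monic polynomial over `k` are bounded by elements of `k`. -/
theorem exists_root_bound (i : k →+* U) {f : k[X]} (hf : f.Monic) {α : U}
    (hα : (f.map i).eval α = 0) : ∃ M : k, -i M < α ∧ α < i M := by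
  refine ⟨1 + ∑ m ∈ Finset.range f.natDegree, (f.coeff m ^ 2 + 1), ?_⟩
  set M : U := i (1 + ∑ m ∈ Finset.range f.natDegree, (f.coeff m ^ 2 + 1)) with hM
  have hM' : M = 1 + ∑ m ∈ Finset.range f.natDegree, ((i (f.coeff m)) ^ 2 + 1) := by
    simp [hM]
  rw [← abs_lt]
  by_contra hcon
  have hcon := not_lt.1 hcon
  have hs : ∑ m ∈ Finset.range f.natDegree, |i (f.coeff m)| < M := by
    rw [hM']
    refine lt_of_le_of_lt (Finset.sum_le_sum (fun m _ => ?_)) (lt_one_add _)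
    have h1 := abs_nonneg (i (f.coeff m))
    rw [← sq_abs]
    nlinarith [sq_nonneg (|i (f.coeff m)| - 1)]
  have hM1 : 1 ≤ M := by
    rw [hM']
    exact le_add_of_nonneg_right (Finset.sum_nonneg (fun m _ => by positivity))
  have h1 : 1 ≤ |α| := hM1.trans hcon
  have e : α ^ f.natDegree = -∑ m ∈ Finset.range f.natDegree, i (f.coeff m) * α ^ m := by
    have := hα
    rw [eval_map, eval₂_eq_sum_range, Finset.sum_range_succ, hf.coeff_natDegree, map_one,
      one_mul] at this
    linear_combination this
  rcases Nat.eq_zero_or_pos f.natDegree with hd | hd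
  · rw [hd] at e
    simp at e
  · obtain ⟨d, hd'⟩ := Nat.exists_eq_succ_of_ne_zero hd.ne'
    have h2 : |α| ^ f.natDegree ≤ (∑ m ∈ Finset.range f.natDegree, |i (f.coeff m)|) * |α| ^ d := by
      rw [← abs_pow, e, abs_neg, Finset.sum_mul]
      refine (Finset.abs_sum_le_sum_abs _ _).trans (Finset.sum_le_sum (fun m hm => ?_))
      rw [abs_mul, abs_pow]
      have : m ≤ d := by
        have := Finset.mem_range.1 hm
        omega
      gcongr
    have h3 : (∑ m ∈ Finset.range f.natDegree, |i (f.coeff m)|) * |α| ^ d < |α| * |α| ^ d :=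
      mul_lt_mul_of_pos_right (hs.trans_le hcon) (by positivity)
    rw [hd', pow_succ'] at h2
    rw [hd'] at h3
    exact absurd h2 (not_le.2 h3)

/-- The induction step for `Saturated.root_mem`. Suppose a root `α` of `f` is not in the image of
`k`. It is isolated by elements of `k` with no critical point of `f` between them, since the critical
points have lower degree. The sign change of `f` around it takes place on the side of `R` as well and
gives a root `β` there. The two roots lie in the same cut of `k`, and a polynomial of degree less than
that of `f` has all its roots in `k`, so its sign at the root is decided by the cut. Hence all
polynomials have the same sign at `α` as at `β`, and saturation puts `α` into `k`. -/
theorem Saturated.root_step_monic (hU : PolyIVT U) (hR : PolyIVT R) (h : Saturated i j)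
    (f : k[X]) (hf : f.Monic)
    (IH : ∀ g : k[X], g ≠ 0 → g.natDegree < f.natDegree →
      (∀ α, (g.map i).eval α = 0 → α ∈ Set.range i) ∧
      (∀ β, (g.map j).eval β = 0 → β ∈ Set.range j))
    (α : U) (hα : (f.map i).eval α = 0) : α ∈ Set.range i := by
  classical
  by_contra hαr
  have : IsDomain k := h.inj.isDomain i
  have : CharZero k := i.charZero
  have hjinj := h.symm.inj
  have hs := h.sign
  have hmapi : ∀ g : k[X], g ≠ 0 → g.map i ≠ 0 := fun g hg =>
    (Polynomial.map_ne_zero_iff h.inj).2 hg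
  have hmapj : ∀ g : k[X], g ≠ 0 → g.map j ≠ 0 := fun g hg =>
    (Polynomial.map_ne_zero_iff hjinj).2 hg
  have hd0 : f.natDegree ≠ 0 := by
    intro h0
    rw [hf.natDegree_eq_zero] at h0
    simp [h0] at hα
  have hf'0 : derivative f ≠ 0 := fun h0 => hd0 (derivative_eq_zero.1 h0)
  have hf'd : (derivative f).natDegree < f.natDegree := natDegree_derivative_lt hd0
  obtain ⟨M, hM1, hM2⟩ := exists_root_bound i hf hα
  -- isolate `α` between two elements of `k` with no critical point of `f` between them
  let A : Finset U := insert (i M) (insert (-i M) ((derivative f).map i).roots.toFinset)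
  have hAr : ∀ a ∈ A, a ∈ Set.range i := by
    intro a ha
    simp only [A, Finset.mem_insert, Multiset.mem_toFinset] at ha
    rcases ha with rfl | rfl | ha
    · exact ⟨M, rfl⟩
    · exact ⟨-M, map_neg _ _⟩
    · exact (IH _ hf'0 hf'd).1 a (mem_roots'.1 ha).2
  obtain ⟨lo, hlo1, hlo2⟩ := (A.filter (· < α)).exists_max_image id
    ⟨-i M, by simp [A, hM1]⟩
  obtain ⟨hi, hhi1, hhi2⟩ := (A.filter (α < ·)).exists_min_image id
    ⟨i M, by simp [A, hM2]⟩
  rw [Finset.mem_filter] at hlo1 hhi1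
  obtain ⟨c, rfl⟩ := hAr lo hlo1.1
  obtain ⟨c', rfl⟩ := hAr hi hhi1.1
  have hcα := hlo1.2
  have hαc' := hhi1.2
  have hcrit : ∀ x, i c < x → x < i c' → (derivative (f.map i)).eval x ≠ 0 := by
    intro x h1 h2 h3
    rw [derivative_map] at h3
    have hxA : x ∈ A := by
      simp only [A, Finset.mem_insert, Multiset.mem_toFinset]
      exact Or.inr (Or.inr ((mem_roots (hmapi _ hf'0)).2 h3))
    have hxα : x ≠ α := fun e => hαr (e ▸ hAr x hxA)
    rcases hxα.lt_or_gt with hx | hx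
    · exact absurd (hlo2 x (Finset.mem_filter.2 ⟨hxA, hx⟩)) (not_le.2 h1)
    · exact absurd (hhi2 x (Finset.mem_filter.2 ⟨hxA, hx⟩)) (not_le.2 h2)
  have hcc' : i c < i c' := hcα.trans hαc'
  have sgn : ∀ x, i c ≤ x → x ≤ i c' → _ := fun x h1 h2 =>
    hU.sign_change (f.map i) (hmapi f hf.ne_zero) hcα hαc' hα hcrit h1 h2
  -- the sign change is visible in `k`, so it produces a root on the other side
  have hneg : (f.map j).eval (j c) * (f.map j).eval (j c') < 0 := by
    have := (sgn (i c) le_rfl hcc'.le).1 hcα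
    rw [eval_map_apply, eval_map_apply, ← map_mul, hs.neg, map_mul] at this
    rwa [eval_map_apply, eval_map_apply]
  obtain ⟨β, hcβ, hβc', hβ⟩ := hR _ _ _ ((hs.lt _ _).1 hcc') hneg
  have hcrit' : ∀ x, j c < x → x < j c' → (derivative (f.map j)).eval x ≠ 0 := by
    intro x h1 h2 h3
    rw [derivative_map] at h3
    obtain ⟨z, rfl⟩ := (IH _ hf'0 hf'd).2 x h3
    rw [eval_map_apply, map_eq_zero_iff _ hjinj] at h3
    refine hcrit (i z) ((hs.lt _ _).2 h1) ((hs.lt _ _).2 h2) ?_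
    rw [derivative_map, eval_map_apply, h3, map_zero]
  have sgn' : ∀ x, j c ≤ x → x ≤ j c' → _ := fun x h1 h2 =>
    hR.sign_change (f.map j) (hmapj f hf.ne_zero) hcβ hβc' hβ hcrit' h1 h2
  -- `α` and `β` realise the same cut in `k`
  have hcut : ∀ z, (i z < α → j z < β) ∧ (α < i z → β < j z) := by
    intro z
    have hzα : i z ≠ α := fun e => hαr ⟨z, e⟩
    by_cases h1 : i c ≤ i z
    · by_cases h2 : i z ≤ i c'
      · have a1 := sgn (i z) h1 h2
        have a2 := sgn' (j z) ((hs.le _ _).1 h1) ((hs.le _ _).1 h2)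
        rw [eval_map_apply, eval_map_apply, ← map_mul, hs.neg, hs] at a1
        rw [eval_map_apply, eval_map_apply, ← map_mul] at a2
        have hne : j z = β → i z = α := by
          intro e
          exfalso
          have h0 : j (eval z f) = 0 := by rw [← eval_map_apply, e, hβ]
          rcases hzα.lt_or_gt with hx | hx
          · have := a1.1 hx
            simp [h0] at this
          · have := a1.2 hx
            simp [h0] at this
        constructor
        · intro hx
          rcases lt_trichotomy (j z) β with hy | hy | hy
          · exact hy
          · exact absurd (hne hy) hzα
          · exact absurd (a1.1 hx) (a2.2 hy).le.not_gt
        · intro hx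
          rcases lt_trichotomy (j z) β with hy | hy | hy
          · exact absurd (a1.2 hx) (a2.1 hy).le.not_gt
          · exact absurd (hne hy) hzα
          · exact hy
      · have h2 := not_le.1 h2
        exact ⟨fun hx => absurd (hαc'.trans h2) hx.le.not_gt,
          fun _ => hβc'.trans ((hs.lt _ _).1 h2)⟩
    · have h1 := not_le.1 h1
      exact ⟨fun _ => ((hs.lt _ _).1 h1).trans hcβ,
        fun hx => absurd (h1.trans hcα) hx.le.not_gt⟩
  obtain ⟨w2, hw2⟩ := h.exists_inv 2 two_ne_zero
  obtain ⟨z, hz, -⟩ := h.closed α β (by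
    intro p
    -- reduce modulo `f`; all roots of the remainder lie in `k`
    set r := p %ₘ f with hr
    have hpr : p = r + f * (p /ₘ f) := (modByMonic_add_div p f).symm
    have e1 : (p.map i).eval α = (r.map i).eval α := by
      conv_lhs => rw [hpr]
      simp only [Polynomial.map_add, Polynomial.map_mul, eval_add, eval_mul, hα]; ring
    have e2 : (p.map j).eval β = (r.map j).eval β := by
      conv_lhs => rw [hpr]
      simp only [Polynomial.map_add, Polynomial.map_mul, eval_add, eval_mul, hβ]; ring
    rw [e1, e2]
    by_cases hr0 : r = 0
    · simp [hr0]
    have hrd : r.natDegree < f.natDegree :=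
      natDegree_modByMonic_lt p hf (fun h1 => hd0 (by simp [h1]))
    have hroots := IH r hr0 hrd
    obtain ⟨z, hz⟩ := exists_mem_same_side (i := i) (r.map i).roots.toFinset α
      (fun a ha => hroots.1 a (mem_roots'.1 (Multiset.mem_toFinset.1 ha)).2)
      (fun ha => hαr (hroots.1 α (mem_roots'.1 (Multiset.mem_toFinset.1 ha)).2)) ⟨w2, hw2⟩
    have hz' : ∀ a, (r.map i).eval a = 0 → (a < i z ∧ a < α) ∨ (i z < a ∧ α < a) := fun a ha =>
      hz a (Multiset.mem_toFinset.2 ((mem_roots (hmapi r hr0)).2 ha))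
    have hz'' : ∀ b, (r.map j).eval b = 0 → (b < j z ∧ b < β) ∨ (j z < b ∧ β < b) := by
      intro b hb
      obtain ⟨y, rfl⟩ := hroots.2 b hb
      rw [eval_map_apply, map_eq_zero_iff _ hjinj] at hb
      rcases hz' (i y) (by rw [eval_map_apply, hb, map_zero]) with ⟨h1, h2⟩ | ⟨h1, h2⟩
      · exact Or.inl ⟨(hs.lt _ _).1 h1, (hcut y).1 h2⟩
      · exact Or.inr ⟨(hs.lt _ _).1 h1, (hcut y).2 h2⟩
    rw [← hU.pos_iff_of_same_side _ hz', ← hR.pos_iff_of_same_side _ hz'', eval_map_apply,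
      eval_map_apply]
    exact hs _)
  exact hαr ⟨z, hz⟩

/-- The ring of a saturated pair contains all roots, on both sides, of its nonzero polynomials. -/
theorem Saturated.root_mem (hU : PolyIVT U) (hR : PolyIVT R) (h : Saturated i j)
    (f : k[X]) (hf : f ≠ 0) :
    (∀ α, (f.map i).eval α = 0 → α ∈ Set.range i) ∧
      (∀ β, (f.map j).eval β = 0 → β ∈ Set.range j) := by
  have : IsDomain k := h.inj.isDomain i
  induction hn : f.natDegree using Nat.strong_induction_on generalizing f with
  | _ n ih =>
    subst hn
    obtain ⟨w, hw⟩ := h.exists_inv f.leadingCoeff (leadingCoeff_ne_zero.2 hf)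
    have hw0 : w ≠ 0 := by rintro rfl; simp at hw
    have hmon : (C w * f).Monic := monic_C_mul_of_mul_leadingCoeff_eq_one (by rwa [mul_comm])
    have hdeg : (C w * f).natDegree = f.natDegree := natDegree_C_mul hw0
    have IH : ∀ g : k[X], g ≠ 0 → g.natDegree < (C w * f).natDegree → _ := fun g hg hgd =>
      ih g.natDegree (hdeg ▸ hgd) g hg rfl
    constructor
    · intro α hα
      exact h.root_step_monic hU hR _ hmon IH α (by simp [hα])
    · intro β hβ
      exact h.symm.root_step_monic hR hU _ hmon (fun g hg hgd => (IH g hg hgd).symm) β (by simp [hβ])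

/-- The signs of finitely many polynomials at a point `t` of `R` are realised by an element of `k`:
all their roots lie in `k`, so it suffices to choose an element on the same side of them as `t`. -/
theorem Saturated.exists_same_sign (hU : PolyIVT U) (hR : PolyIVT R) (h : Saturated i j)
    (S : Finset k[X]) (t : R) :
    ∃ z : k, ∀ p ∈ S, 0 < (p.map i).eval (i z) ↔ 0 < (p.map j).eval t := by
  classical
  have : IsDomain k := h.inj.isDomain i
  have : CharZero k := i.charZero
  suffices ∃ z : k, ∀ p ∈ S, 0 < (p.map j).eval (j z) ↔ 0 < (p.map j).eval t by
    obtain ⟨z, hz⟩ := this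
    refine ⟨z, fun p hp => ?_⟩
    rw [← hz p hp, eval_map_apply, eval_map_apply]
    exact h.sign _
  by_cases ht : t ∈ Set.range j
  · obtain ⟨z, rfl⟩ := ht
    exact ⟨z, fun _ _ => Iff.rfl⟩
  let A : Finset R := S.biUnion (fun p => (p.map j).roots.toFinset)
  have hA : ∀ a ∈ A, a ∈ Set.range j := by
    intro a ha
    obtain ⟨p, -, hpa⟩ := Finset.mem_biUnion.1 ha
    have h1 := mem_roots'.1 (Multiset.mem_toFinset.1 hpa)
    exact (h.root_mem hU hR p (fun h0 => h1.1 (by simp [h0]))).2 a h1.2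
  obtain ⟨w2, hw2⟩ := h.exists_inv 2 two_ne_zero
  obtain ⟨z, hz⟩ := exists_mem_same_side (i := j) A t hA (fun h1 => ht (hA t h1)) ⟨w2, hw2⟩
  refine ⟨z, fun p hp => ?_⟩
  by_cases hp0 : p.map j = 0
  · simp [hp0]
  exact hR.pos_iff_of_same_side _ (fun a ha => hz a (Finset.mem_biUnion.2 ⟨p, hp,
    Multiset.mem_toFinset.2 ((mem_roots hp0).2 ha)⟩))
end

/-! ### Transfer of points -/

section
variable {k U R : Type} [CommRing k] [Field U] [LinearOrder U] [IsStrictOrderedRing U]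
  [Field R] [LinearOrder R] [IsStrictOrderedRing R] {i : k →+* U} {j : k →+* R}

/-- Zorn's lemma, applied to the subrings of `U × R` whose elements have components of equal
sign. -/
theorem SameSign.exists_saturated (h : SameSign i j) :
    ∃ (k' : Type) (_ : CommRing k') (e : k →+* k') (i' : k' →+* U) (j' : k' →+* R),
      Saturated i' j' ∧ i'.comp e = i ∧ j'.comp e = j := by
  let S : Set (Subring (U × R)) := {G | ∀ z ∈ G, 0 < z.1 ↔ 0 < z.2}
  have h0 : (i.prod j).range ∈ S := by
    rintro _ ⟨z, rfl⟩
    exact h z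
  obtain ⟨G, hG0, hG⟩ := zorn_le_nonempty₀ S (by
    intro c hcS hc y hy
    refine ⟨sSup c, ?_, fun z hz => le_sSup hz⟩
    intro z hz
    obtain ⟨G, hGc, hzG⟩ := (Subring.mem_sSup_of_directedOn ⟨y, hy⟩ hc.directedOn).1 hz
    exact hcS hGc z hzG) _ h0
  have hGS : G ∈ S := hG.prop
  let i' : G →+* U := (RingHom.fst U R).comp G.subtype
  let j' : G →+* R := (RingHom.snd U R).comp G.subtype
  have hs : SameSign i' j' := fun z => hGS z z.2
  have hinj : Function.Injective i' := by
    intro a b hab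
    exact Subtype.ext (Prod.ext hab ((hs.eq a b).1 hab))
  refine ⟨G, inferInstance, (i.prod j).codRestrict G (fun z => hG0 ⟨z, rfl⟩), i', j',
    ⟨hs, hinj, ?_⟩, rfl, rfl⟩
  intro α β hp
  -- adjoining `(α, β)` to `G` keeps signs, hence `(α, β) ∈ G`
  let φ : G[X] →+* U × R := (eval₂RingHom i' α).prod (eval₂RingHom j' β)
  have hφ : φ.range ∈ S := by
    rintro _ ⟨p, rfl⟩
    have := hp p
    rwa [eval_map, eval_map] at this
  have hle : G ≤ φ.range := fun z hz => ⟨C ⟨z, hz⟩, by simp [φ, i', j']⟩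
  have hmem : (α, β) ∈ G := hG.le_of_ge hφ hle ⟨X, by simp [φ]⟩
  exact ⟨⟨(α, β), hmem⟩, rfl, rfl⟩

end

section Ultrapower
variable {ι U : Type} (φ : Ultrafilter ι) [Field U] [LinearOrder U] [IsStrictOrderedRing U]

/-- The quotient map from the power `ι → U` to the ultrapower of `U` along `φ`. -/
def germHom : (ι → U) →+* Filter.Germ (φ : Filter ι) U where
  toFun f := (f : Filter.Germ (φ : Filter ι) U)
  map_one' := rfl
  map_mul' _ _ := rfl
  map_zero' := rfl
  map_add' _ _ := rfl

omit [LinearOrder U] [IsStrictOrderedRing U] in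
theorem germHom_surjective : Function.Surjective (germHom (U := U) φ) := fun f =>
  Filter.Germ.inductionOn f (fun f => ⟨f, rfl⟩)

omit [IsStrictOrderedRing U] in
theorem germHom_pos (f : ι → U) : 0 < germHom φ f ↔ ∀ᶠ x in (φ : Filter ι), 0 < f x :=
  Filter.Germ.coe_pos

omit [IsStrictOrderedRing U] in
theorem germHom_lt (f g : ι → U) : germHom φ f < germHom φ g ↔ ∀ᶠ x in (φ : Filter ι), f x < g x :=
  Filter.Germ.coe_lt

theorem PolyIVT.germ (hU : PolyIVT U) : PolyIVT (Filter.Germ (φ : Filter ι) U) := by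
  intro p a b hab hneg
  obtain ⟨P, rfl⟩ := map_surjective _ (germHom_surjective φ) p
  obtain ⟨a, rfl⟩ := germHom_surjective φ a
  obtain ⟨b, rfl⟩ := germHom_surjective φ b
  have hev : ∀ (c : ι → U) x, (P.eval c) x = (P.map (Pi.evalRingHom (fun _ => U) x)).eval (c x) := by
    intro c x
    exact (eval_map_apply (Pi.evalRingHom (fun _ => U) x) c).symm
  rw [eval_map_apply, eval_map_apply, ← map_mul, ← map_zero (germHom φ), germHom_lt] at hneg
  rw [germHom_lt] at hab
  have hex : ∀ᶠ x in (φ : Filter ι), ∃ c, a x < c ∧ c < b x ∧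
      (P.map (Pi.evalRingHom (fun _ => U) x)).eval c = 0 := by
    filter_upwards [hneg, hab] with x h1 h2
    refine hU _ _ _ h2 ?_
    rw [← hev, ← hev]
    exact h1
  obtain ⟨c, hc⟩ := hex.choice
  refine ⟨germHom φ c, (germHom_lt φ _ _).2 (hc.mono fun x h => h.1),
    (germHom_lt φ _ _).2 (hc.mono fun x h => h.2.1), ?_⟩
  rw [eval_map_apply, ← map_zero (germHom φ)]
  refine Filter.Germ.coe_eq.2 (hc.mono fun x h => ?_)
  rw [hev]
  exact h.2.2

end Ultrapower

/-- The transfer of points. If `U` and `R` have the intermediate value property and agree on the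
signs of the elements of `k`, then the signs of finitely many polynomials over `k` at a point of
`R ^ n` are realised at a point of `U ^ n`.

By induction on `n`: an ultrapower of `U` contains an element at which all polynomials over a
saturated extension of `k` have the signs they have at the first coordinate. The induction hypothesis
over the polynomial ring in that coordinate gives a point of the ultrapower, and finitely many
signs at such a point hold already at one of the points of `U ^ n` that represent it. -/
theorem exists_point_of_sameSign (n : ℕ) :
    ∀ {k U R : Type} [CommRing k] [Field U] [LinearOrder U] [IsStrictOrderedRing U]
      [Field R] [LinearOrder R] [IsStrictOrderedRing R] (_ : PolyIVT U) (_ : PolyIVT R)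
      (i : k →+* U) (j : k →+* R) (_ : SameSign i j) (x : Fin n → R)
      (S : Finset (MvPolynomial (Fin n) k)),
      ∃ u : Fin n → U, ∀ p ∈ S, 0 < p.eval₂ i u ↔ 0 < p.eval₂ j x := by
  classical
  induction n with
  | zero =>
    intro k U R _ _ _ _ _ _ _ hU hR i j h x S
    refine ⟨fun _ => 0, fun p _ => ?_⟩
    obtain ⟨c, rfl⟩ := MvPolynomial.C_surjective (Fin 0) p
    simpa using h c
  | succ n ih =>
    intro k U R _ _ _ _ _ _ _ hU hR i j h x S
    obtain ⟨k', _, e, i', j', hsat, rfl, rfl⟩ := h.exists_saturated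
    -- a point of an ultrapower of `U` filling the cut of `x 0`
    let ι := Finset k'[X]
    choose z hz using fun T : ι => hsat.exists_same_sign hU hR T (x 0)
    let φ : Ultrafilter ι := Ultrafilter.of Filter.atTop
    let cst : k' →+* Filter.Germ (φ : Filter ι) U := (germHom φ).comp (RingHom.pi fun _ => i')
    let t : ι → U := fun T => i' (z T)
    let I : k'[X] →+* Filter.Germ (φ : Filter ι) U := eval₂RingHom cst (germHom φ t)
    let J : k'[X] →+* R := eval₂RingHom j' (x 0)
    have hI : ∀ p : k'[X], I p = germHom φ (fun T => (p.map i').eval (t T)) := by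
      intro p
      have : I = (germHom φ).comp (RingHom.pi fun T => eval₂RingHom i' (t T)) := by
        refine Polynomial.ringHom_ext (fun a => ?_) ?_
        · simp only [I, cst, coe_eval₂RingHom, eval₂_C, RingHom.comp_apply]
          congr 1
          ext T
          simp
        · simp only [I, cst, coe_eval₂RingHom, eval₂_X, RingHom.comp_apply]
          congr 1
          ext T
          simp
      rw [this, RingHom.comp_apply]
      congr 1
      ext T
      simp [eval_map]
    have hIJ : SameSign I J := by
      intro p
      rw [hI, germHom_pos]
      have hev : ∀ᶠ T in (φ : Filter ι), (0 < (p.map i').eval (t T) ↔ 0 < J p) := by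
        have h1 : ∀ᶠ T in (Filter.atTop : Filter ι), {p} ≤ T := Filter.eventually_ge_atTop {p}
        filter_upwards [Ultrafilter.of_le Filter.atTop h1] with T hT
        have := hz T p (Finset.singleton_subset_iff.1 hT)
        rw [this, eval_map]
        rfl
      constructor
      · intro h1
        obtain ⟨T, h2, h3⟩ := (h1.and hev).exists
        exact h3.1 h2
      · intro h1
        filter_upwards [hev] with T hT using hT.2 h1
    let toP : MvPolynomial (Fin (n + 1)) k →+* MvPolynomial (Fin n) k'[X] :=
      MvPolynomial.eval₂Hom ((MvPolynomial.C).comp ((C : k' →+* k'[X]).comp e))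
        (Fin.cons (MvPolynomial.C X) MvPolynomial.X)
    obtain ⟨u, hu⟩ := ih (hU.germ φ) hR I J hIJ (Fin.tail x) (S.image toP)
    choose u' hu' using fun m => germHom_surjective φ (u m)
    have hR' : ∀ p, (toP p).eval₂ J (Fin.tail x) = p.eval₂ (j'.comp e) x := by
      intro p
      have : (MvPolynomial.eval₂Hom J (Fin.tail x)).comp toP =
          MvPolynomial.eval₂Hom (j'.comp e) x := by
        refine MvPolynomial.ringHom_ext (fun a => ?_) (fun m => ?_)
        · simp [toP, J]
        · refine Fin.cases ?_ (fun m => ?_) m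
          · simp [toP, J]
          · simp [toP, Fin.tail]
      exact congrArg (fun f => f p) this
    have hU' : ∀ p, (toP p).eval₂ I u = germHom φ (fun T =>
        p.eval₂ (i'.comp e) (Fin.cons (t T) (fun m => u' m T))) := by
      intro p
      have : (MvPolynomial.eval₂Hom I u).comp toP = (germHom φ).comp (RingHom.pi fun T =>
          MvPolynomial.eval₂Hom (i'.comp e) (Fin.cons (t T) (fun m => u' m T))) := by
        refine MvPolynomial.ringHom_ext (fun a => ?_) (fun m => ?_)
        · simp only [toP, RingHom.comp_apply, MvPolynomial.coe_eval₂Hom, MvPolynomial.eval₂_C, I,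
            coe_eval₂RingHom, eval₂_C, cst]
          congr 1
          ext T
          simp
        · simp only [toP, RingHom.comp_apply, MvPolynomial.coe_eval₂Hom, MvPolynomial.eval₂_X]
          refine Fin.cases ?_ (fun m => ?_) m
          · simp only [Fin.cons_zero, MvPolynomial.eval₂_C, I, coe_eval₂RingHom, eval₂_X]
            congr 1
            ext T
            simp
          · simp only [Fin.cons_succ, MvPolynomial.eval₂_X, ← hu' m]
            congr 1
            ext T
            simp
      exact congrArg (fun f => f p) this
    have hev : ∀ p ∈ S, ∀ᶠ T in (φ : Filter ι),
        (0 < p.eval₂ (i'.comp e) (Fin.cons (t T) (fun m => u' m T)) ↔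
          0 < p.eval₂ (j'.comp e) x) := by
      intro p hp
      have h1 := hu (toP p) (Finset.mem_image_of_mem _ hp)
      rw [hR', hU', germHom_pos] at h1
      by_cases h2 : 0 < p.eval₂ (j'.comp e) x
      · filter_upwards [h1.2 h2] with T hT using iff_of_true hT h2
      · filter_upwards [Ultrafilter.eventually_not.2 (fun h3 => h2 (h1.1 h3))] with T hT
          using iff_of_false hT h2
    obtain ⟨T, hT⟩ := ((Filter.eventually_all_finset S).2 hev).exists
    exact ⟨_, hT⟩

/-! ### Maximal precones -/

/-- A proper subsemiring `Q` containing the squares of all differences of its elements, that is,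
a proper preordering of the subring `Q - Q` it generates. -/
structure IsPrecone {Ω : Type} [CommRing Ω] (Q : Subsemiring Ω) : Prop where
  neg_one : -1 ∉ Q
  sq : ∀ a ∈ Q, ∀ b ∈ Q, (a - b) ^ 2 ∈ Q

section Precone
variable {Ω : Type} [CommRing Ω] {Q : Subsemiring Ω}

theorem IsPrecone.exists_maximal (hQ : IsPrecone Q) : ∃ Q', Q ≤ Q' ∧ Maximal IsPrecone Q' := by
  refine zorn_le_nonempty₀ {Q | IsPrecone Q} ?_ Q hQ
  intro c hcS hc y hy
  have hmem : ∀ z, z ∈ sSup c ↔ ∃ G ∈ c, z ∈ G := fun z =>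
    Subsemiring.mem_sSup_of_directedOn ⟨y, hy⟩ hc.directedOn
  refine ⟨sSup c, ⟨?_, ?_⟩, fun z hz => le_sSup hz⟩
  · rw [hmem]
    rintro ⟨G, hG, h⟩
    exact (hcS hG).neg_one h
  · intro a ha b hb
    rw [hmem] at ha hb ⊢
    obtain ⟨G, hG, ha⟩ := ha
    obtain ⟨G', hG', hb⟩ := hb
    rcases hc.total hG hG' with h | h
    · exact ⟨G', hG', (hcS hG').sq _ (h ha) _ hb⟩
    · exact ⟨G, hG, (hcS hG).sq _ ha _ (h hb)⟩

/-- Maximality of `Q`, spelled out: adjoining the missing element `a - b` to `Q` gives a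
precone containing `-1`. -/
theorem exists_neg_one_eq (hQ : Maximal IsPrecone Q) {a b : Ω} (ha : a ∈ Q) (hb : b ∈ Q)
    (hx : a - b ∉ Q) : ∃ p ∈ Q, ∃ q ∈ Q, -1 = p + (a - b) * q := by
  have hs : (a - b) ^ 2 ∈ Q := hQ.prop.sq a ha b hb
  let Q' : Subsemiring Ω :=
    { carrier := {y | ∃ p ∈ Q, ∃ q ∈ Q, y = p + (a - b) * q}
      one_mem' := ⟨1, one_mem _, 0, zero_mem _, by ring⟩
      zero_mem' := ⟨0, zero_mem _, 0, zero_mem _, by ring⟩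
      add_mem' := by
        rintro _ _ ⟨p, hp, q, hq, rfl⟩ ⟨p', hp', q', hq', rfl⟩
        exact ⟨p + p', add_mem hp hp', q + q', add_mem hq hq', by ring⟩
      mul_mem' := by
        rintro _ _ ⟨p, hp, q, hq, rfl⟩ ⟨p', hp', q', hq', rfl⟩
        exact ⟨p * p' + (a - b) ^ 2 * (q * q'),
          add_mem (mul_mem hp hp') (mul_mem hs (mul_mem hq hq')), p * q' + q * p',
          add_mem (mul_mem hp hq') (mul_mem hq hp'), by ring⟩ }
  by_contra hno
  have hQ' : IsPrecone Q' := by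
    refine ⟨fun ⟨p, hp, q, hq, h⟩ => hno ⟨p, hp, q, hq, h⟩, ?_⟩
    rintro _ ⟨p, hp, q, hq, rfl⟩ _ ⟨p', hp', q', hq', rfl⟩
    refine ⟨_, hQ.prop.sq (p + a * q + b * q')
      (add_mem (add_mem hp (mul_mem ha hq)) (mul_mem hb hq')) (p' + a * q' + b * q)
      (add_mem (add_mem hp' (mul_mem ha hq')) (mul_mem hb hq)), 0, zero_mem _, by ring⟩
  refine hx (hQ.le_of_ge hQ' (fun z hz => ⟨z, hz, 0, zero_mem _, by ring⟩)
    ⟨0, zero_mem _, 1, one_mem _, by ring⟩)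

theorem mem_or_neg_mem_of_maximal (hQ : Maximal IsPrecone Q) {a b : Ω} (ha : a ∈ Q) (hb : b ∈ Q) :
    a - b ∈ Q ∨ -(a - b) ∈ Q := by
  by_contra! h
  obtain ⟨h1, h2⟩ := h
  obtain ⟨p, hp, q, hq, h1⟩ := exists_neg_one_eq hQ ha hb h1
  rw [neg_sub] at h2
  obtain ⟨p', hp', q', hq', h2⟩ := exists_neg_one_eq hQ hb ha h2
  refine hQ.prop.neg_one ?_
  have : -1 = p + p' + p * p' + (a - b) ^ 2 * (q * q') := by
    linear_combination (1 + p') * h1 - (a - b) * q * h2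
  rw [this]
  exact add_mem (add_mem (add_mem hp hp') (mul_mem hp hp'))
    (mul_mem (hQ.prop.sq a ha b hb) (mul_mem hq hq'))

theorem mem_or_neg_mem_of_eq (hQ : Maximal IsPrecone Q) (hd : ∀ x, ∃ a ∈ Q, ∃ b ∈ Q, x = a - b)
    (x : Ω) : x ∈ Q ∨ -x ∈ Q := by
  obtain ⟨a, ha, b, hb, rfl⟩ := hd x
  exact mem_or_neg_mem_of_maximal hQ ha hb

/-- The support `Q ∩ -Q` of a maximal precone is a prime ideal. -/
theorem exists_support (hQ : Maximal IsPrecone Q) (hd : ∀ x, ∃ a ∈ Q, ∃ b ∈ Q, x = a - b) :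
    ∃ I : Ideal Ω, I.IsPrime ∧ ∀ x, x ∈ I ↔ x ∈ Q ∧ -x ∈ Q := by
  let I : Ideal Ω :=
    { carrier := {x | x ∈ Q ∧ -x ∈ Q}
      zero_mem' := ⟨zero_mem _, by rw [neg_zero]; exact zero_mem _⟩
      add_mem' := by
        rintro x y ⟨h1, h2⟩ ⟨h3, h4⟩
        exact ⟨add_mem h1 h3, by rw [neg_add]; exact add_mem h2 h4⟩
      smul_mem' := by
        rintro c x ⟨h1, h2⟩
        obtain ⟨a, ha, b, hb, rfl⟩ := hd c
        constructor
        · have := add_mem (mul_mem ha h1) (mul_mem hb h2)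
          rwa [show a * x + b * -x = (a - b) • x by rw [smul_eq_mul]; ring] at this
        · have := add_mem (mul_mem ha h2) (mul_mem hb h1)
          rwa [show a * -x + b * x = -((a - b) • x) by rw [smul_eq_mul]; ring] at this }
  have hI : ∀ x, x ∈ I ↔ x ∈ Q ∧ -x ∈ Q := fun x => Iff.rfl
  have key : ∀ x, -x ∉ Q → ∃ p ∈ Q, ∃ q ∈ Q, -1 = p + (-x) * q := by
    intro x hx
    obtain ⟨a, ha, b, hb, h⟩ := hd (-x)
    rw [h] at hx ⊢
    exact exists_neg_one_eq hQ ha hb hx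
  have key2 : ∀ x y, -x ∉ Q → -y ∉ Q → -(x * y) ∉ Q := by
    intro x y hx hy hxy
    obtain ⟨p, hp, q, hq, h1⟩ := key x hx
    obtain ⟨p', hp', q', hq', h2⟩ := key y hy
    refine hQ.prop.neg_one ?_
    have : -1 = p + p' + p * p' + -(x * y) * (q * q') := by
      linear_combination (1 + p') * h1 + x * q * h2
    rw [this]
    exact add_mem (add_mem (add_mem hp hp') (mul_mem hp hp')) (mul_mem hxy (mul_mem hq hq'))
  have hsgn : ∀ x, x ∉ I → -x ∉ Q ∨ - -x ∉ Q := by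
    intro x hx
    rw [hI] at hx
    rw [neg_neg]
    tauto
  refine ⟨I, ⟨?_, ?_⟩, hI⟩
  · rw [Ne, Ideal.eq_top_iff_one, hI]
    exact fun h => hQ.prop.neg_one h.2
  · intro x y hxy
    by_contra! h
    obtain ⟨hx, hy⟩ := h
    have hxy' : -(x * y) ∈ Q ∧ x * y ∈ Q := (hI _).1 hxy |>.symm
    rcases hsgn x hx with h1 | h1 <;> rcases hsgn y hy with h2 | h2
    · exact key2 _ _ h1 h2 hxy'.1
    · exact key2 _ _ h1 h2 (by simpa using hxy'.2)
    · exact key2 _ _ h1 h2 (by simpa using hxy'.2)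
    · exact key2 _ _ h1 h2 (by simpa using hxy'.1)

end Precone

/-! ### The intermediate value property from maximality -/

section WeightedSquares
variable {E : Type} [Field E] [LinearOrder E] [IsStrictOrderedRing E]

variable (E) in
/-- The sums of terms `q * g ^ 2` with `g` a polynomial and `q ≥ 0` a constant. -/
noncomputable def weightedSquares : Subsemiring E[X] :=
  Submonoid.subsemiringClosure
    { carrier := {s | ∃ q : E, 0 ≤ q ∧ ∃ g : E[X], s = C q * g ^ 2}
      one_mem' := ⟨1, zero_le_one, 1, by simp⟩
      mul_mem' := by
        rintro _ _ ⟨q, hq, g, rfl⟩ ⟨q', hq', g', rfl⟩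
        exact ⟨q * q', mul_nonneg hq hq', g * g', by rw [map_mul]; ring⟩ }

theorem mem_weightedSquares {s : E[X]} : s ∈ weightedSquares E ↔
    s ∈ AddSubmonoid.closure {s | ∃ q : E, 0 ≤ q ∧ ∃ g : E[X], s = C q * g ^ 2} :=
  Submonoid.subsemiringClosure_mem _

theorem C_mul_sq_mem {q : E} (hq : 0 ≤ q) (g : E[X]) : C q * g ^ 2 ∈ weightedSquares E :=
  mem_weightedSquares.2 (AddSubmonoid.subset_closure ⟨q, hq, g, rfl⟩)

theorem weightedSquares_eval_nonneg {s : E[X]} (hs : s ∈ weightedSquares E) (a : E) :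
    0 ≤ s.eval a := by
  rw [mem_weightedSquares] at hs
  induction hs using AddSubmonoid.closure_induction with
  | mem s hs =>
    obtain ⟨q, hq, g, rfl⟩ := hs
    simp only [eval_mul, eval_C, eval_pow]
    positivity
  | zero => simp
  | add s t _ _ h1 h2 => rw [eval_add]; exact add_nonneg h1 h2

/-- Replacing each square by the square of its remainder reduces a sum of weighted squares modulo
`f` to one of degree at most `2 * f.natDegree - 2`. -/
theorem weightedSquares_reduce {f : E[X]} (hf : f.natDegree ≠ 0) {s : E[X]}
    (hs : s ∈ weightedSquares E) :
    ∃ s' ∈ weightedSquares E, f ∣ s - s' ∧ s'.natDegree + 2 ≤ 2 * f.natDegree := by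
  rw [mem_weightedSquares] at hs
  induction hs using AddSubmonoid.closure_induction with
  | mem s hs =>
    obtain ⟨q, hq, g, rfl⟩ := hs
    have hlt := natDegree_mod_lt g hf
    refine ⟨_, C_mul_sq_mem hq (g % f), ?_, ?_⟩
    · have h := EuclideanDomain.div_add_mod g f
      refine ⟨C q * (g / f) * (g + g % f), ?_⟩
      linear_combination (-C q * (g + g % f)) * h
    · have h1 : (C q * (g % f) ^ 2).natDegree ≤ ((g % f) ^ 2).natDegree := natDegree_C_mul_le _ _
      rw [natDegree_pow] at h1
      omega
  | zero =>
    refine ⟨0, zero_mem _, by simp, ?_⟩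
    rw [natDegree_zero]
    omega
  | add s t _ _ h1 h2 =>
    obtain ⟨s', hs', hd1, hn1⟩ := h1
    obtain ⟨t', ht', hd2, hn2⟩ := h2
    refine ⟨s' + t', add_mem hs' ht', ?_, ?_⟩
    · rw [add_sub_add_comm]
      exact dvd_add hd1 hd2
    · have := natDegree_add_le s' t'
      omega

theorem natDegree_ne_zero_of_sign_change {f : E[X]} {a b : E} (h : f.eval a * f.eval b < 0) :
    f.natDegree ≠ 0 := by
  intro h0
  rw [eq_C_of_natDegree_eq_zero h0, eval_C, eval_C] at h
  exact absurd (mul_self_nonneg (f.coeff 0)) (not_le.2 h)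

/-- A polynomial `f` that changes sign does not divide `1 + s` for a sum `s` of weighted squares.
Reducing `s` modulo `f`, the cofactor of `f` in `1 + s` has smaller degree than `f`, and it
changes sign at the same points because `1 + s` is positive. -/
theorem not_dvd_one_add_of_sign_change (d : ℕ) : ∀ (f : E[X]) (a b : E), f.natDegree = d →
    f.eval a * f.eval b < 0 → ∀ s ∈ weightedSquares E, ¬ f ∣ 1 + s := by
  induction d using Nat.strong_induction_on with
  | _ d ih =>
    intro f a b hd hab s hs hdvd
    have hf0 := natDegree_ne_zero_of_sign_change hab
    obtain ⟨s', hs', hss', hn⟩ := weightedSquares_reduce hf0 hs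
    have hdvd' : f ∣ 1 + s' := by
      have := dvd_sub hdvd hss'
      rwa [show 1 + s - (s - s') = 1 + s' by ring] at this
    obtain ⟨h, hh⟩ := hdvd'
    have ha : 0 < f.eval a * h.eval a := by
      rw [← eval_mul, ← hh, eval_add, eval_one]
      linarith [weightedSquares_eval_nonneg hs' a]
    have hb : 0 < f.eval b * h.eval b := by
      rw [← eval_mul, ← hh, eval_add, eval_one]
      linarith [weightedSquares_eval_nonneg hs' b]
    have hh0 : h ≠ 0 := by rintro rfl; simp at ha
    have hf : f ≠ 0 := by rintro rfl; simp at hf0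
    have hdeg : f.natDegree + h.natDegree ≤ s'.natDegree := by
      rw [← natDegree_mul hf hh0, ← hh]
      refine (natDegree_add_le _ _).trans ?_
      simp
    refine ih h.natDegree (by omega) h a b rfl ?_ s' hs' ⟨f, by rw [hh, mul_comm]⟩
    have := mul_pos ha hb
    by_contra hc
    have := mul_nonpos_of_nonpos_of_nonneg hab.le (not_lt.1 hc)
    linarith

end WeightedSquares

section
variable {R Ω : Type} [Field R] [LinearOrder R] [IsStrictOrderedRing R] [Field Ω] [IsAlgClosed Ω]
  {Q : Subsemiring Ω} {ι : R →+* Ω}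

/-- An irreducible polynomial over `R` that changes sign has a root in `R`: adjoining a root in
`Ω` keeps the cone proper, so maximality puts the root into `R`. -/
theorem exists_root_of_irreducible (hQ : Maximal IsPrecone Q) (hι : ∀ z, ι z ∈ Q ↔ 0 ≤ z)
    (hr : ∀ a ∈ Q, ∃ z, ι z = a) {f : R[X]} (hf : Irreducible f) {a b : R}
    (hab : f.eval a * f.eval b < 0) : ∃ c, f.eval c = 0 := by
  let _ := ι.toAlgebra
  have hal : algebraMap R Ω = ι := rfl
  have hf0 := natDegree_ne_zero_of_sign_change hab
  obtain ⟨γ, hγ⟩ := IsAlgClosed.exists_aeval_eq_zero Ω f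
    (fun h => hf0 (natDegree_eq_of_degree_eq_some h))
  have hdvd : ∀ g : R[X], aeval γ g = 0 → f ∣ g := by
    intro g hg
    have hγint : IsIntegral R γ := isAlgebraic_iff_isIntegral.1 ⟨f, hf.ne_zero, hγ⟩
    exact ((minpoly.irreducible hγint).dvd_symm hf (minpoly.dvd R γ hγ)).trans
      (minpoly.dvd R γ hg)
  let Q' : Subsemiring Ω := (weightedSquares R).map (aeval γ : R[X] →ₐ[R] Ω).toRingHom
  have hsq : ∀ g : R[X], (aeval γ g) ^ 2 ∈ Q' := fun g =>
    ⟨_, C_mul_sq_mem zero_le_one g, by simp⟩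
  have hle : Q ≤ Q' := by
    intro z hz
    obtain ⟨r, rfl⟩ := hr z hz
    exact ⟨_, C_mul_sq_mem ((hι r).1 hz) 1, by simp [hal]⟩
  have hQ' : IsPrecone Q' := by
    refine ⟨?_, ?_⟩
    · rintro ⟨s, hs, h⟩
      refine not_dvd_one_add_of_sign_change _ f a b rfl hab s hs (hdvd _ ?_)
      have h : aeval γ s = -1 := h
      rw [map_add, map_one, h]
      ring
    · rintro _ ⟨s, hs, rfl⟩ _ ⟨t, ht, rfl⟩
      have := hsq (s - t)
      rwa [map_sub] at this
  have hmem : ∀ g : R[X], ∃ z, ι z = (aeval γ g) ^ 2 := fun g =>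
    hr _ (hQ.le_of_ge hQ' hle (hsq g))
  obtain ⟨u, hu⟩ := hmem (C (1 / 2) * (X + 1))
  obtain ⟨v, hv⟩ := hmem (C (1 / 2) * (X - 1))
  have h2 : ι (1 / 2) * 2 = 1 := by
    rw [← map_ofNat ι 2, ← map_mul]
    norm_num
  refine ⟨u - v, ?_⟩
  have huv : ι (u - v) = γ := by
    rw [map_sub, hu, hv]
    simp only [map_mul, aeval_C, map_add, map_sub, aeval_X, map_one, hal]
    linear_combination (2 * ι (1 / 2) * γ + γ) * h2
  have : ι (f.eval (u - v)) = 0 := by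
    rw [← hγ, ← huv, ← hal, aeval_algebraMap_apply_eq_algebraMap_eval]
  exact (map_eq_zero ι).1 this

/-- The field ordered by a maximal precone of an algebraically closed field has the intermediate
value property. Factors reduce the claim to an irreducible polynomial, which has a root somewhere;
splitting off the roots outside the interval lowers the degree. -/
theorem polyIVT_of_maximal (hQ : Maximal IsPrecone Q) (hι : ∀ z, ι z ∈ Q ↔ 0 ≤ z)
    (hr : ∀ a ∈ Q, ∃ z, ι z = a) : PolyIVT R := by
  suffices H : ∀ (d : ℕ) (f : R[X]) (a b : R), f.natDegree = d → a < b →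
      f.eval a * f.eval b < 0 → ∃ c, a < c ∧ c < b ∧ f.eval c = 0 from
    fun f a b => H _ f a b rfl
  intro d
  induction d using Nat.strong_induction_on with
  | _ d ih =>
    intro f a b hd hlt hab
    have hf0 := natDegree_ne_zero_of_sign_change hab
    have hf : f ≠ 0 := by rintro rfl; simp at hf0
    -- one factor of a nontrivial factorization changes sign
    have hfac : ∀ g h : R[X], f = g * h → g.natDegree < d → h.natDegree < d →
        ∃ c, a < c ∧ c < b ∧ f.eval c = 0 := by
      rintro g h rfl hg hh
      rw [eval_mul, eval_mul, mul_mul_mul_comm] at hab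
      rcases mul_neg_iff.1 hab with ⟨_, h1⟩ | ⟨h1, _⟩
      · obtain ⟨c, h2, h3, h4⟩ := ih _ hh h a b rfl hlt h1
        exact ⟨c, h2, h3, by rw [eval_mul, h4, mul_zero]⟩
      · obtain ⟨c, h2, h3, h4⟩ := ih _ hg g a b rfl hlt h1
        exact ⟨c, h2, h3, by rw [eval_mul, h4, zero_mul]⟩
    by_cases hirr : Irreducible f
    · obtain ⟨c, hc⟩ := exists_root_of_irreducible hQ hι hr hirr hab
      by_cases hcab : a < c ∧ c < b
      · exact ⟨c, hcab.1, hcab.2, hc⟩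
      obtain ⟨g, rfl⟩ := dvd_iff_isRoot.2 hc
      have hg : g ≠ 0 := right_ne_zero_of_mul hf
      rw [natDegree_mul (X_sub_C_ne_zero c) hg, natDegree_X_sub_C] at hd
      have hpos : 0 ≤ (a - c) * (b - c) := by
        rcases not_and_or.1 hcab with h | h
        · exact mul_nonneg (by linarith) (by linarith)
        · exact mul_nonneg_of_nonpos_of_nonpos (by linarith) (by linarith)
      rw [eval_mul, eval_mul, mul_mul_mul_comm] at hab
      simp only [eval_sub, eval_X, eval_C] at hab
      obtain ⟨x, h2, h3, h4⟩ := ih _ (by omega) g a b rfl hlt (neg_of_mul_neg_right hab hpos)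
      exact ⟨x, h2, h3, by rw [eval_mul, h4, mul_zero]⟩
    · have hu : ¬ IsUnit f := fun h => hf0 (natDegree_eq_zero_of_isUnit h)
      rw [irreducible_iff] at hirr
      push Not at hirr
      obtain ⟨g, h, hgh, hg, hh⟩ := hirr hu
      have hg0 : g ≠ 0 := by rintro rfl; simp at hgh; exact hf hgh
      have hh0 : h ≠ 0 := by rintro rfl; simp at hgh; exact hf hgh
      have hg1 : 0 < g.natDegree := natDegree_pos_iff_degree_pos.2 (degree_pos_of_ne_zero_of_nonunit hg0 hg)
      have hh1 : 0 < h.natDegree := natDegree_pos_iff_degree_pos.2 (degree_pos_of_ne_zero_of_nonunit hh0 hh)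
      have := natDegree_mul hg0 hh0
      rw [← hgh, hd] at this
      exact hfac g h hgh (by omega) (by omega)

end

/-! ### Preorderings are nonnegative in some real closed field -/

/-- The differences of elements of a maximal precone of an algebraic extension `Ω` of `F` form a
field, provided they include `F`, and the precone orders that field. -/
theorem exists_ordered_subfield {F Ω : Type} [Field F] [Field Ω] [Algebra F Ω]
    [Algebra.IsAlgebraic F Ω] {Q : Subsemiring Ω} (hQ : Maximal IsPrecone Q)
    (hF : ∀ x : F, ∃ a ∈ Q, ∃ b ∈ Q, algebraMap F Ω x = a - b) :
    ∃ (R : Type) (_ : Field R) (_ : LinearOrder R) (_ : IsStrictOrderedRing R) (ι : R →+* Ω),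
      (∀ z, ι z ∈ Q ↔ 0 ≤ z) ∧ ∀ a ∈ Q, ∃ z, ι z = a := by
  classical
  let S : Subalgebra F Ω :=
    { carrier := {x | ∃ a ∈ Q, ∃ b ∈ Q, x = a - b}
      add_mem' := by
        rintro _ _ ⟨a, ha, b, hb, rfl⟩ ⟨c, hc, d, hd, rfl⟩
        exact ⟨a + c, add_mem ha hc, b + d, add_mem hb hd, by ring⟩
      mul_mem' := by
        rintro _ _ ⟨a, ha, b, hb, rfl⟩ ⟨c, hc, d, hd, rfl⟩
        exact ⟨a * c + b * d, add_mem (mul_mem ha hc) (mul_mem hb hd), a * d + b * c,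
          add_mem (mul_mem ha hd) (mul_mem hb hc), by ring⟩
      algebraMap_mem' := hF }
  let E : IntermediateField F Ω := S.toIntermediateField fun x hx =>
    S.inv_mem_of_algebraic (x := ⟨x, hx⟩) (Algebra.IsAlgebraic.isAlgebraic x)
  have hE : ∀ x : E, ∃ a ∈ Q, ∃ b ∈ Q, (x : Ω) = a - b := fun x => x.2
  let K : RingCone E :=
    { Q.comap (algebraMap E Ω) with
      eq_zero_of_mem_of_neg_mem' := by
        intro a h1 h2
        have h1 : (a : Ω) ∈ Q := h1
        have h2 : -(a : Ω) ∈ Q := h2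
        by_contra h0
        obtain ⟨x, hx, y, hy, hxy⟩ := hE a⁻¹
        refine hQ.prop.neg_one ?_
        have h0' : (a : Ω) ≠ 0 := fun h => h0 (Subtype.ext h)
        have : (a : Ω) * (x - y) = 1 := by
          rw [← hxy]
          exact mul_inv_cancel₀ h0'
        rw [show (-1 : Ω) = -(a : Ω) * x + a * y by rw [← this]; ring]
        exact add_mem (mul_mem h2 hx) (mul_mem h1 hy) }
  have hK : ∀ x : E, x ∈ K ↔ (x : Ω) ∈ Q := fun x => Iff.rfl
  have : HasMemOrNegMem K := ⟨fun x => by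
    obtain ⟨a, ha, b, hb, hx⟩ := hE x
    rw [hK, hK, NegMemClass.coe_neg, hx]
    exact mem_or_neg_mem_of_maximal hQ ha hb⟩
  let : LinearOrder E := .mkOfAddGroupCone K
  have : IsOrderedRing E := IsOrderedRing.mkOfCone K
  refine ⟨E, inferInstance, inferInstance, IsOrderedRing.toIsStrictOrderedRing E,
    algebraMap E Ω, fun z => ?_, fun a ha => ?_⟩
  · change _ ↔ z - 0 ∈ K
    rw [sub_zero, hK]
    rfl
  · exact ⟨⟨a, a, ha, 0, zero_mem _, by rw [sub_zero]⟩, rfl⟩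

/-- A proper preordering of a ring containing `1 / 2` is nonnegative under some homomorphism to
an ordered field satisfying the intermediate value theorem for polynomials. -/
theorem exists_hom_nonneg {A : Type} [CommRing A] (hw : ∃ w : A, 2 * w = 1) (T : Subsemiring A)
    (hT : ∀ a, a ^ 2 ∈ T) (hT1 : -1 ∉ T) :
    ∃ (R : Type) (_ : Field R) (_ : LinearOrder R) (_ : IsStrictOrderedRing R) (φ : A →+* R),
      PolyIVT R ∧ ∀ a ∈ T, 0 ≤ φ a := by
  obtain ⟨Q, hTQ, hQ⟩ := IsPrecone.exists_maximal (Q := T) ⟨hT1, fun a _ b _ => hT (a - b)⟩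
  have hsq : ∀ a, a ^ 2 ∈ Q := fun a => hTQ (hT a)
  obtain ⟨w, hw⟩ := hw
  have hd : ∀ x, ∃ a ∈ Q, ∃ b ∈ Q, x = a - b := fun x =>
    ⟨_, hsq (w * (x + 1)), _, hsq (w * (x - 1)), by
      linear_combination (-2 * w * x - x) * hw⟩
  obtain ⟨I, hI, hmemI⟩ := exists_support hQ hd
  let F := FractionRing (A ⧸ I)
  let Ω := AlgebraicClosure F
  let ψF : A →+* F := (algebraMap (A ⧸ I) F).comp (Ideal.Quotient.mk I)
  let ψ : A →+* Ω := (algebraMap F Ω).comp ψF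
  have hψ0 : ∀ x, ψ x = 0 ↔ x ∈ I := by
    intro x
    rw [← Ideal.Quotient.eq_zero_iff_mem, RingHom.comp_apply, map_eq_zero, RingHom.comp_apply,
      FaithfulSMul.algebraMap_eq_zero_iff]
  let P : Subsemiring Ω :=
    { carrier := {ω | ∃ p ∈ Q, ∃ s, s ∉ I ∧ ω * ψ s ^ 2 = ψ p}
      one_mem' := ⟨1, one_mem _, 1, fun h => hI.ne_top ((Ideal.eq_top_iff_one _).2 h), by simp⟩
      zero_mem' := ⟨0, zero_mem _, 1, fun h => hI.ne_top ((Ideal.eq_top_iff_one _).2 h), by simp⟩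
      add_mem' := by
        rintro x y ⟨p, hp, s, hs, h⟩ ⟨p', hp', s', hs', h'⟩
        refine ⟨p * s' ^ 2 + p' * s ^ 2, add_mem (mul_mem hp (hsq _)) (mul_mem hp' (hsq _)),
          s * s', fun hss => (hI.mem_or_mem hss).elim hs hs', ?_⟩
        simp only [map_add, map_mul, map_pow]
        linear_combination ψ s' ^ 2 * h + ψ s ^ 2 * h'
      mul_mem' := by
        rintro x y ⟨p, hp, s, hs, h⟩ ⟨p', hp', s', hs', h'⟩
        refine ⟨p * p', mul_mem hp hp', s * s', fun hss => (hI.mem_or_mem hss).elim hs hs', ?_⟩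
        simp only [map_mul]
        linear_combination y * ψ s' ^ 2 * h + ψ p * h' }
  have hPF : ∀ x : F, ∃ a ∈ Q, ∃ b ∈ Q, ∃ s, s ∉ I ∧ algebraMap F Ω x * ψ s ^ 2 = ψ (a - b) := by
    intro x
    obtain ⟨u, v, hv, rfl⟩ := IsFractionRing.div_surjective (A := A ⧸ I) x
    obtain ⟨a, rfl⟩ := Ideal.Quotient.mk_surjective u
    obtain ⟨s, rfl⟩ := Ideal.Quotient.mk_surjective v
    obtain ⟨c, hc, d, hd', hcd⟩ := hd (a * s)
    have hs : s ∉ I := fun h => nonZeroDivisors.ne_zero hv (Ideal.Quotient.eq_zero_iff_mem.2 h)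
    refine ⟨c, hc, d, hd', s, hs, ?_⟩
    have hs0 : ψ s ≠ 0 := fun h => hs ((hψ0 s).1 h)
    rw [← hcd, map_div₀, map_mul]
    change ψ a / ψ s * ψ s ^ 2 = _
    rw [pow_two, ← mul_assoc, div_mul_cancel₀ _ hs0]
  have hP : IsPrecone P := by
    refine ⟨?_, ?_⟩
    · rintro ⟨p, hp, s, hs, h⟩
      have h0 : s ^ 2 + p ∈ I := by
        rw [← hψ0, map_add, map_pow, ← h]
        ring
      refine hs (hI.mem_of_pow_mem 2 ((hmemI _).2 ⟨hsq s, ?_⟩))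
      have := add_mem ((hmemI _).1 h0).2 hp
      rwa [neg_add, neg_add_cancel_right] at this
    · rintro x ⟨p, hp, s, hs, h⟩ y ⟨p', hp', s', hs', h'⟩
      refine ⟨_, hsq (p * s' ^ 2 - p' * s ^ 2), (s * s') ^ 2,
        fun hss => (hI.mem_or_mem (hI.mem_of_pow_mem 2 hss)).elim hs hs', ?_⟩
      simp only [map_sub, map_mul, map_pow]
      rw [← h, ← h']
      ring
  obtain ⟨Q', hPQ', hQ'⟩ := hP.exists_maximal
  obtain ⟨R, i1, i2, i3, ι, h1, h2⟩ := exists_ordered_subfield (F := F) hQ' (by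
    intro x
    obtain ⟨a, ha, b, hb, s, hs, h⟩ := hPF x
    have hs0 : ψ s ^ 2 ≠ 0 := pow_ne_zero 2 fun h => hs ((hψ0 s).1 h)
    refine ⟨ψ a / ψ s ^ 2, hPQ' ⟨a, ha, s, hs, div_mul_cancel₀ _ hs0⟩, ψ b / ψ s ^ 2,
      hPQ' ⟨b, hb, s, hs, div_mul_cancel₀ _ hs0⟩, ?_⟩
    rw [← sub_div, ← map_sub, ← h, mul_div_cancel_right₀ _ hs0])
  have hψQ' : ∀ a ∈ Q, ψ a ∈ Q' := fun a ha =>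
    hPQ' ⟨a, ha, 1, fun h => hI.ne_top ((Ideal.eq_top_iff_one _).2 h), by simp⟩
  have h3 : ∀ a, ψ a ∈ ι.range := by
    intro a
    obtain ⟨x, hx, y, hy, rfl⟩ := hd a
    rw [map_sub]
    exact sub_mem (h2 _ (hψQ' x hx)) (h2 _ (hψQ' y hy))
  let e : R ≃+* ι.range :=
    RingEquiv.ofBijective ι.rangeRestrict ⟨fun x y h => ι.injective (congrArg Subtype.val h),
      ι.rangeRestrict_surjective⟩
  let φ : A →+* R := (e.symm : ι.range →+* R).comp (ψ.codRestrict ι.range h3)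
  refine ⟨R, i1, i2, i3, φ, polyIVT_of_maximal hQ' h1 h2, fun a ha => ?_⟩
  rw [← h1]
  have : ι (φ a) = ψ a := congrArg Subtype.val (e.apply_symm_apply (ψ.codRestrict ι.range h3 a))
  rw [this]
  exact hψQ' a (hTQ ha)

/-! ### Sums of squares and a Positivstellensatz -/

section
variable {n : ℕ} {p q : MvPolynomial (Fin n) ℝ}

theorem IsSOS.of_sq (p : MvPolynomial (Fin n) ℝ) : IsSOS (p ^ 2) := ⟨1, fun _ => p, by simp⟩

theorem IsSOS.of_const {c : ℝ} (hc : 0 ≤ c) : IsSOS (MvPolynomial.C c : MvPolynomial (Fin n) ℝ) := by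
  have := IsSOS.of_sq (MvPolynomial.C (Real.sqrt c) : MvPolynomial (Fin n) ℝ)
  rwa [← map_pow, Real.sq_sqrt hc] at this

theorem IsSOS.add (hp : IsSOS p) (hq : IsSOS q) : IsSOS (p + q) := by
  obtain ⟨s, f, rfl⟩ := hp
  obtain ⟨t, g, rfl⟩ := hq
  exact ⟨s + t, Fin.append f g, by simp [Fin.sum_univ_add]⟩

theorem IsSOS.mul (hp : IsSOS p) (hq : IsSOS q) : IsSOS (p * q) := by
  obtain ⟨s, f, rfl⟩ := hp
  obtain ⟨t, g, rfl⟩ := hq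
  refine ⟨s * t, fun i => f (finProdFinEquiv.symm i).1 * g (finProdFinEquiv.symm i).2, ?_⟩
  rw [Finset.sum_mul_sum, ← Fintype.sum_prod_type']
  refine Fintype.sum_equiv finProdFinEquiv _ _ fun x => ?_
  simp only [Equiv.symm_apply_apply]
  ring

theorem IsSOS.eval_nonneg (hp : IsSOS p) (x : Fin n → ℝ) : 0 ≤ MvPolynomial.eval x p := by
  obtain ⟨s, f, rfl⟩ := hp
  rw [map_sum]
  exact Finset.sum_nonneg fun i _ => by rw [map_pow]; exact sq_nonneg _

variable (n) in
/-- The sums of squares of polynomials. -/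
noncomputable def sosSemiring : Subsemiring (MvPolynomial (Fin n) ℝ) where
  carrier := {p | IsSOS p}
  zero_mem' := by simpa using IsSOS.of_sq (n := n) 0
  one_mem' := by simpa using IsSOS.of_sq (n := n) 1
  add_mem' := IsSOS.add
  mul_mem' := IsSOS.mul

end

/-- The preordering `T + g T` generated by a preordering `T` and an element `g`. -/
def adjoinCone {A : Type} [CommRing A] (T : Subsemiring A) (hT : ∀ a, a ^ 2 ∈ T) (g : A) :
    Subsemiring A where
  carrier := {y | ∃ p ∈ T, ∃ q ∈ T, y = p + g * q}
  one_mem' := ⟨1, one_mem _, 0, zero_mem _, by ring⟩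
  zero_mem' := ⟨0, zero_mem _, 0, zero_mem _, by ring⟩
  add_mem' := by
    rintro _ _ ⟨p, hp, q, hq, rfl⟩ ⟨p', hp', q', hq', rfl⟩
    exact ⟨p + p', add_mem hp hp', q + q', add_mem hq hq', by ring⟩
  mul_mem' := by
    rintro _ _ ⟨p, hp, q, hq, rfl⟩ ⟨p', hp', q', hq', rfl⟩
    exact ⟨p * p' + g ^ 2 * (q * q'), add_mem (mul_mem hp hp') (mul_mem (hT g) (mul_mem hq hq')),
      p * q' + q * p', add_mem (mul_mem hp hq') (mul_mem hq hp'), by ring⟩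

section
variable {n : ℕ}

/-- The preordering `Σ + g Σ` of polynomials, with `Σ` the sums of squares. -/
noncomputable def sosCone (g : MvPolynomial (Fin n) ℝ) : Subsemiring (MvPolynomial (Fin n) ℝ) :=
  adjoinCone (sosSemiring n) IsSOS.of_sq g

theorem mem_sosCone_of_isSOS (g : MvPolynomial (Fin n) ℝ) {p : MvPolynomial (Fin n) ℝ}
    (hp : IsSOS p) : p ∈ sosCone g :=
  ⟨p, hp, 0, zero_mem _, by ring⟩

theorem sq_mem_sosCone (g p : MvPolynomial (Fin n) ℝ) : p ^ 2 ∈ sosCone g :=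
  mem_sosCone_of_isSOS g (IsSOS.of_sq p)

theorem self_mem_sosCone (g : MvPolynomial (Fin n) ℝ) : g ∈ sosCone g :=
  ⟨0, zero_mem _, 1, one_mem _, by ring⟩

theorem C_mem_sosCone (g : MvPolynomial (Fin n) ℝ) {c : ℝ} (hc : 0 ≤ c) :
    MvPolynomial.C c ∈ sosCone g :=
  mem_sosCone_of_isSOS g (IsSOS.of_const hc)

/-- A Positivstellensatz: if `f < 0` wherever `g ≥ 0`, then `-1` lies in the preordering
generated by `f` and `g`. Otherwise that preordering is nonnegative at a point with coordinates in
some ordered field with the intermediate value property, and this point transfers to `ℝ`. -/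
theorem exists_certificate (g f : MvPolynomial (Fin n) ℝ)
    (h : ∀ x, 0 ≤ MvPolynomial.eval x g → MvPolynomial.eval x f < 0) :
    ∃ t1 ∈ sosCone g, ∃ t ∈ sosCone g, -1 = t1 + f * t := by
  by_contra hno
  let T := adjoinCone (sosCone g) (sq_mem_sosCone g) f
  have hT : ∀ p ∈ sosCone g, p ∈ T := fun p hp => ⟨p, hp, 0, zero_mem _, by ring⟩
  obtain ⟨R, _, _, _, φ, hR, hφ⟩ := exists_hom_nonneg
    ⟨MvPolynomial.C (1 / 2), by
      rw [show (2 : MvPolynomial (Fin n) ℝ) = MvPolynomial.C 2 from (map_ofNat _ 2).symm,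
        ← map_mul]
      norm_num⟩
    T (fun a => hT _ (sq_mem_sosCone g a)) hno
  let j : ℝ →+* R := φ.comp MvPolynomial.C
  have hj : ∀ c : ℝ, 0 ≤ c → 0 ≤ j c := fun c hc => hφ _ (hT _ (C_mem_sosCone g hc))
  have hsgn : SameSign (RingHom.id ℝ) j := by
    intro z
    constructor
    · intro hz
      exact lt_of_le_of_ne (hj z (le_of_lt hz)) fun h0 =>
        (ne_of_gt hz : z ≠ 0) ((map_eq_zero j).1 h0.symm)
    · intro hz
      by_contra hc
      have : 0 ≤ j (-z) := hj _ (neg_nonneg.2 (not_lt.1 hc))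
      rw [map_neg] at this
      linarith
  have hev : ∀ p, p.eval₂ j (fun i => φ (MvPolynomial.X i)) = φ p := by
    intro p
    have : MvPolynomial.eval₂Hom j (fun i => φ (MvPolynomial.X i)) = φ :=
      MvPolynomial.ringHom_ext (fun r => by simp [j]) (fun i => by simp)
    exact congrArg (fun F : _ →+* R => F p) this
  obtain ⟨u, hu⟩ := exists_point_of_sameSign n polyIVT_real hR (RingHom.id ℝ) j hsgn
    (fun i => φ (MvPolynomial.X i)) {-g, -f}
  have key : ∀ p ∈ T, -p ∈ ({-g, -f} : Finset (MvPolynomial (Fin n) ℝ)) →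
      0 ≤ MvPolynomial.eval u p := by
    intro p hp hpS
    by_contra hc
    have h0 : (-p).eval₂ (RingHom.id ℝ) u = -MvPolynomial.eval u p :=
      MvPolynomial.eval₂_neg p _ _
    have h1 := (hu _ hpS).1 (by rw [h0]; linarith)
    rw [hev, map_neg] at h1
    linarith [hφ p hp]
  have h1 := key g (hT _ (self_mem_sosCone g)) (by simp)
  have h2 := key f ⟨0, zero_mem _, 1, one_mem _, by ring⟩ (by simp)
  linarith [h u h1]

end

/-! ### Compactness and the Archimedean property -/

section
variable {n : ℕ}

theorem eval_sum_X_sq (x : Fin n → ℝ) :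
    MvPolynomial.eval x (∑ i, MvPolynomial.X i ^ 2) = ∑ i, x i ^ 2 := by simp

theorem sub_mem_sosCone_mono {g p : MvPolynomial (Fin n) ℝ} {c d : ℝ} (hcd : c ≤ d)
    (h : MvPolynomial.C c + p ∈ sosCone g) : MvPolynomial.C d + p ∈ sosCone g := by
  have := add_mem (C_mem_sosCone g (sub_nonneg.2 hcd)) h
  rwa [← add_assoc, ← map_add, sub_add_cancel] at this

/-- The preordering generated by `N - ∑ xᵢ²` is Archimedean: every polynomial is bounded by a
constant modulo it. -/
theorem exists_bound_mem_sosCone (N : ℝ) (p : MvPolynomial (Fin n) ℝ) :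
    ∃ m : ℝ, MvPolynomial.C m + p ∈ sosCone (MvPolynomial.C N - ∑ i, MvPolynomial.X i ^ 2) ∧
      MvPolynomial.C m + -p ∈ sosCone (MvPolynomial.C N - ∑ i, MvPolynomial.X i ^ 2) := by
  set h : MvPolynomial (Fin n) ℝ := MvPolynomial.C N - ∑ i, MvPolynomial.X i ^ 2 with hh
  have hmul : ∀ p q : MvPolynomial (Fin n) ℝ,
      (∃ m : ℝ, MvPolynomial.C m + p ∈ sosCone h ∧ MvPolynomial.C m + -p ∈ sosCone h) →
      (∃ m : ℝ, MvPolynomial.C m + q ∈ sosCone h ∧ MvPolynomial.C m + -q ∈ sosCone h) →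
      ∃ m : ℝ, MvPolynomial.C m + p * q ∈ sosCone h ∧ MvPolynomial.C m + -(p * q) ∈ sosCone h := by
    rintro p q ⟨m, h1, h2⟩ ⟨l, h3, h4⟩
    have h2' : (2 : MvPolynomial (Fin n) ℝ) * MvPolynomial.C (1 / 2) = 1 := by
      rw [show (2 : MvPolynomial (Fin n) ℝ) = MvPolynomial.C 2 from (map_ofNat _ 2).symm,
        ← map_mul]
      norm_num
    have hhalf := C_mem_sosCone h (show (0 : ℝ) ≤ 1 / 2 by norm_num)
    refine ⟨m * l, ?_, ?_⟩
    · have := mul_mem hhalf (add_mem (mul_mem h1 h3) (mul_mem h2 h4))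
      convert this using 1
      rw [map_mul]
      linear_combination (-(MvPolynomial.C m * MvPolynomial.C l + p * q)) * h2'
    · have := mul_mem hhalf (add_mem (mul_mem h1 h4) (mul_mem h2 h3))
      convert this using 1
      rw [map_mul]
      linear_combination (-(MvPolynomial.C m * MvPolynomial.C l - p * q)) * h2'
  induction p using MvPolynomial.induction_on with
  | C a =>
    refine ⟨|a|, ?_, ?_⟩
    · rw [← map_add]
      exact C_mem_sosCone h (by linarith [neg_abs_le a])
    · rw [← map_neg, ← map_add]
      exact C_mem_sosCone h (by linarith [le_abs_self a])
  | add p q hp hq =>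
    obtain ⟨m, h1, h2⟩ := hp
    obtain ⟨l, h3, h4⟩ := hq
    refine ⟨m + l, ?_, ?_⟩
    · convert add_mem h1 h3 using 1
      rw [map_add]; ring
    · convert add_mem h2 h4 using 1
      rw [map_add]; ring
  | mul_X p i hp =>
    refine hmul _ _ hp ⟨N + 1 / 4, ?_⟩
    have hs : ∑ j ∈ Finset.univ.erase i, (MvPolynomial.X j : MvPolynomial (Fin n) ℝ) ^ 2
        ∈ sosCone h := sum_mem fun j _ => sq_mem_sosCone h _
    have hsum := Finset.add_sum_erase Finset.univ
      (fun j => (MvPolynomial.X j : MvPolynomial (Fin n) ℝ) ^ 2) (Finset.mem_univ i)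
    have h4 : (MvPolynomial.C (1 / 4) : MvPolynomial (Fin n) ℝ) = MvPolynomial.C (1 / 2) ^ 2 := by
      rw [← map_pow]; norm_num
    have h2' : (2 : MvPolynomial (Fin n) ℝ) * MvPolynomial.C (1 / 2) = 1 := by
      rw [show (2 : MvPolynomial (Fin n) ℝ) = MvPolynomial.C 2 from (map_ofNat _ 2).symm,
        ← map_mul]
      norm_num
    -- `N + 1/4 ± xᵢ = (N - ∑ xⱼ²) + ∑_{j ≠ i} xⱼ² + (xᵢ ± 1/2)²`
    constructor
    · convert add_mem (add_mem (self_mem_sosCone h) hs)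
        (sq_mem_sosCone h (MvPolynomial.X i + MvPolynomial.C (1 / 2))) using 1
      rw [map_add, h4, hh]
      linear_combination (-MvPolynomial.X i) * h2' - hsum
    · convert add_mem (add_mem (self_mem_sosCone h) hs)
        (sq_mem_sosCone h (MvPolynomial.X i - MvPolynomial.C (1 / 2))) using 1
      rw [map_add, h4, hh]
      linear_combination (MvPolynomial.X i) * h2' - hsum

/-- Compactness of `{μ ≥ 0}` is witnessed algebraically: `N - ∑ xᵢ²` lies in the preordering
generated by `μ` for some constant `N`. -/
theorem exists_ball_mem_sosCone (μ : MvPolynomial (Fin n) ℝ)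
    (hμ : IsCompact {x : Fin n → ℝ | 0 ≤ MvPolynomial.eval x μ}) :
    ∃ N : ℝ, MvPolynomial.C N - ∑ i, MvPolynomial.X i ^ 2 ∈ sosCone μ := by
  obtain ⟨N, hN0, hN⟩ : ∃ N : ℝ, 0 ≤ N ∧ ∀ x, 0 ≤ MvPolynomial.eval x μ → ∑ i, x i ^ 2 < N := by
    obtain ⟨M, hM⟩ := hμ.exists_bound_of_continuousOn
      (f := fun x : Fin n → ℝ => ∑ i, x i ^ 2) (by fun_prop)
    refine ⟨|M| + 1, by positivity, fun x hx => ?_⟩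
    have h1 := hM x hx
    rw [Real.norm_eq_abs] at h1
    linarith [le_abs_self (∑ i, x i ^ 2), le_abs_self M]
  set S : MvPolynomial (Fin n) ℝ := ∑ i, MvPolynomial.X i ^ 2 with hS
  have hSmem : S ∈ sosCone μ := sum_mem fun j _ => sq_mem_sosCone μ _
  obtain ⟨t1, ht1, t, ht, hc⟩ := exists_certificate μ (S - MvPolynomial.C N) (fun x hx => by
    rw [map_sub, hS, eval_sum_X_sq, MvPolynomial.eval_C]
    linarith [hN x hx])
  obtain ⟨m, -, σ, hσ, τ, hτ, hm⟩ := exists_bound_mem_sosCone N t1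
  rw [← hS] at hm
  have hσ' := mem_sosCone_of_isSOS μ hσ
  have hτ' := mem_sosCone_of_isSOS μ hτ
  have h1t1 : 1 + t1 ∈ sosCone μ := add_mem (one_mem _) ht1
  -- an upper bound for `t1` with respect to `μ`, not just with respect to the ball
  have hbd : MvPolynomial.C (m + (m / 2) ^ 2) + -t1 ∈ sosCone μ := by
    have := add_mem (add_mem (mul_mem h1t1 hσ')
      (mul_mem (sq_mem_sosCone μ (MvPolynomial.C N - S)) (mul_mem ht hτ')))
      (sq_mem_sosCone μ (t1 - MvPolynomial.C (m / 2)))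
    convert this using 1
    have h2 : (MvPolynomial.C m : MvPolynomial (Fin n) ℝ) = 2 * MvPolynomial.C (m / 2) := by
      rw [show (2 : MvPolynomial (Fin n) ℝ) = MvPolynomial.C 2 from (map_ofNat _ 2).symm,
        ← map_mul]
      congr 1
      ring
    rw [map_add, map_pow]
    linear_combination (1 + t1) * hm - (MvPolynomial.C N - S) * τ * hc - t1 * h2
  refine ⟨N + N * (m + (m / 2) ^ 2), ?_⟩
  have := add_mem (add_mem (mul_mem (sq_mem_sosCone μ (MvPolynomial.C N - S)) ht)
    (mul_mem ht1 hSmem)) (mul_mem (C_mem_sosCone μ hN0) hbd)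
  convert this using 1
  rw [map_add, map_mul]
  linear_combination (-(MvPolynomial.C N - S)) * hc

/-- The case of a ball: a polynomial positive on it lies in the preordering generated by
`N - ∑ xᵢ²`. -/
theorem mem_sosCone_of_pos_on_ball (N : ℝ) (f : MvPolynomial (Fin n) ℝ)
    (hf : ∀ x : Fin n → ℝ, 0 ≤ MvPolynomial.eval x (MvPolynomial.C N - ∑ i, MvPolynomial.X i ^ 2) →
      0 < MvPolynomial.eval x f) :
    f ∈ sosCone (MvPolynomial.C N - ∑ i, MvPolynomial.X i ^ 2) := by
  obtain ⟨t1, ht1, t, ht, hc⟩ := exists_certificate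
    (MvPolynomial.C N - ∑ i, MvPolynomial.X i ^ 2) (-f) (fun x hx => by
      rw [map_neg]
      linarith [hf x hx])
  obtain ⟨m, -, hm⟩ := exists_bound_mem_sosCone N t
  obtain ⟨r, hr, -⟩ := exists_bound_mem_sosCone N f
  set h : MvPolynomial (Fin n) ℝ := MvPolynomial.C N - ∑ i, MvPolynomial.X i ^ 2 with hh
  let M := max m 1
  have hM : 0 < M := lt_max_of_lt_right one_pos
  have hMt := sub_mem_sosCone_mono (le_max_left m 1 : m ≤ M) hm
  have hMM : (MvPolynomial.C (1 / M) * MvPolynomial.C M : MvPolynomial (Fin n) ℝ) = 1 := by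
    rw [← map_mul, one_div_mul_cancel hM.ne', map_one]
  -- each step lowers the constant `r` with `r + f` in the cone by `1 / M`
  have step : ∀ r : ℝ, 0 ≤ r → MvPolynomial.C r + f ∈ sosCone h →
      MvPolynomial.C (r - 1 / M) + f ∈ sosCone h := by
    intro r hr0 hr
    have := mul_mem (C_mem_sosCone h (one_div_nonneg.2 hM.le))
      (add_mem (add_mem (mul_mem hMt hr) ht1) (mul_mem (C_mem_sosCone h hr0) ht))
    convert this using 1
    rw [map_sub]
    linear_combination (-(MvPolynomial.C r + f)) * hMM + MvPolynomial.C (1 / M) * hc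
  have iter : ∀ k : ℕ, MvPolynomial.C (max 0 (r - k / M)) + f ∈ sosCone h := by
    intro k
    induction k with
    | zero => exact sub_mem_sosCone_mono (by simp) hr
    | succ k ih =>
      refine sub_mem_sosCone_mono ?_ (step _ (le_max_left _ _) ih)
      rw [sub_le_iff_le_add]
      have : 0 < 1 / M := by positivity
      refine max_le (add_nonneg (le_max_left _ _) this.le) ?_
      have h2 := le_max_right 0 (r - ((k + 1 : ℕ) : ℝ) / M)
      push_cast at h2 ⊢
      rw [add_div] at h2 ⊢
      linarith
  obtain ⟨k, hk⟩ := exists_nat_ge (r * M)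
  have hk' : r - k / M ≤ 0 := by
    rw [sub_nonpos, le_div_iff₀ hM]
    exact hk
  have := iter k
  rwa [max_eq_left hk', map_zero, zero_add] at this

end

/-! ### From the ball to the constraint set -/

/-- The quantity `u (1 - u) ^ s` is at most `1 / s` on `[0, 1]`, by Bernoulli's inequality
`1 + s u ≤ (1 + u) ^ s`. -/
theorem nat_mul_mul_one_sub_pow_le {u : ℝ} (h0 : 0 ≤ u) (h1 : u ≤ 1) (s : ℕ) :
    s * (u * (1 - u) ^ s) ≤ 1 := by
  have hb : (1 : ℝ) + s * u ≤ (1 + u) ^ s := one_add_mul_le_pow (by linarith) s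
  have hp : 0 ≤ (1 - u) ^ s := pow_nonneg (by linarith) s
  have h2 : (1 + u) ^ s * (1 - u) ^ s ≤ 1 := by
    rw [← mul_pow]
    exact pow_le_one₀ (by nlinarith) (by nlinarith)
  nlinarith

theorem neg_le_one_sub_pow_mul {u : ℝ} (h1 : |u| ≤ 1) {r : ℕ} (hr : 0 < r) :
    max 0 (-u) - 1 / r ≤ -((1 - u) ^ (2 * r) * u) := by
  obtain ⟨h2, h3⟩ := abs_le.1 h1
  have hr' : (0 : ℝ) < r := Nat.cast_pos.2 hr
  rcases le_total 0 u with h | h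
  · rw [max_eq_left (by linarith)]
    have := nat_mul_mul_one_sub_pow_le h h3 (2 * r)
    push_cast at this
    have hp : 0 ≤ u * (1 - u) ^ (2 * r) := mul_nonneg h (pow_nonneg (by linarith) _)
    have : (1 - u) ^ (2 * r) * u ≤ 1 / r := by
      rw [le_div_iff₀ hr']
      nlinarith
    linarith
  · rw [max_eq_right (by linarith)]
    have hp : 1 ≤ (1 - u) ^ (2 * r) := one_le_pow₀ (by linarith)
    have : 0 < 1 / (r : ℝ) := by positivity
    nlinarith

section
variable {n m : ℕ}

/-- If `p > 0` on the part of a compact set `B` where all `gⱼ ≥ 0`, and `|gⱼ| ≤ 1` on `B`, then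
subtracting suitable terms `λ (1 - gⱼ) ^ (2 r) gⱼ` makes `p` positive on the whole of `B`: such a
term is large where `gⱼ` is negative and almost zero where `gⱼ` is nonnegative. -/
theorem exists_pos_on_compact {B : Set (Fin n → ℝ)} (hB : IsCompact B)
    (p : (Fin n → ℝ) → ℝ) (g : Fin m → (Fin n → ℝ) → ℝ) (hpc : Continuous p)
    (hgc : ∀ j, Continuous (g j)) (hg : ∀ j, ∀ x ∈ B, |g j x| ≤ 1)
    (hp : ∀ x ∈ B, (∀ j, 0 ≤ g j x) → 0 < p x) :
    ∃ (l : ℝ) (r : ℕ), 0 ≤ l ∧ ∀ x ∈ B, 0 < p x - l * ∑ j, (1 - g j x) ^ (2 * r) * g j x := by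
  rcases B.eq_empty_or_nonempty with rfl | hne
  · exact ⟨0, 0, le_rfl, by simp⟩
  let F : (Fin n → ℝ) → ℝ := fun x => ∑ j, max 0 (-g j x)
  have hFc : Continuous F := continuous_finsetSum _ fun j _ => continuous_const.max (hgc j).neg
  have hF0 : ∀ x, 0 ≤ F x := fun x => Finset.sum_nonneg fun j _ => le_max_left _ _
  obtain ⟨l, hl, hpos⟩ : ∃ l : ℝ, 0 ≤ l ∧ ∀ x ∈ B, 0 < p x + l * F x := by
    have hB' : IsCompact (B ∩ {x | p x ≤ 0}) := hB.inter_right (isClosed_le hpc continuous_const)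
    rcases (B ∩ {x | p x ≤ 0}).eq_empty_or_nonempty with he | hne'
    · refine ⟨0, le_rfl, fun x hx => ?_⟩
      rw [zero_mul, add_zero]
      by_contra hc
      exact he.subset ⟨hx, not_lt.1 hc⟩
    obtain ⟨y, hy, hymin⟩ := hB'.exists_isMinOn hne' hFc.continuousOn
    obtain ⟨z, hz, hzmin⟩ := hB'.exists_isMinOn hne' hpc.continuousOn
    have hFy : 0 < F y := by
      refine lt_of_le_of_ne (hF0 y) fun h0 => ?_
      have h1 := (Finset.sum_eq_zero_iff_of_nonneg fun j _ => le_max_left 0 (-g j y)).1 h0.symm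
      have h2 := hp y hy.1 fun j => by
        have := h1 j (Finset.mem_univ j)
        have := le_max_right 0 (-g j y)
        linarith
      exact absurd hy.2 (not_le.2 h2)
    have hpz : p z ≤ 0 := hz.2
    refine ⟨(1 - p z) / F y, div_nonneg (by linarith) hFy.le, fun x hx => ?_⟩
    by_cases hpx : p x ≤ 0
    · have h1 : F y ≤ F x := hymin ⟨hx, hpx⟩
      have h2 : p z ≤ p x := hzmin ⟨hx, hpx⟩
      have h3 : (1 - p z) / F y * F y ≤ (1 - p z) / F y * F x :=
        mul_le_mul_of_nonneg_left h1 (div_nonneg (by linarith) hFy.le)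
      rw [div_mul_cancel₀ _ hFy.ne'] at h3
      linarith
    · have := mul_nonneg (div_nonneg (by linarith) hFy.le : 0 ≤ (1 - p z) / F y) (hF0 x)
      linarith
  obtain ⟨y, hy, hymin⟩ := hB.exists_isMinOn hne
    (hpc.add (continuous_const.mul hFc) : Continuous fun x => p x + l * F x).continuousOn
  have hy0 := hpos y hy
  obtain ⟨r, hr⟩ := exists_nat_gt (l * m / (p y + l * F y))
  have hr0 : (0 : ℝ) < r := lt_of_le_of_lt (by positivity) hr
  rw [div_lt_iff₀ hy0] at hr
  refine ⟨l, r, hl, fun x hx => ?_⟩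
  have h1 : p y + l * F y ≤ p x + l * F x := hymin hx
  have h2 : F x - m / r ≤ -∑ j, (1 - g j x) ^ (2 * r) * g j x := by
    have := Finset.sum_le_sum fun j (_ : j ∈ Finset.univ) =>
      neg_le_one_sub_pow_mul (hg j x hx) (Nat.cast_pos.1 hr0)
    rw [Finset.sum_sub_distrib, Finset.sum_neg_distrib] at this
    simpa [F, div_eq_mul_inv] using this
  have h3 := mul_le_mul_of_nonneg_left h2 hl
  have h4 : l * (m / r) < p y + l * F y := by
    rw [← mul_div_assoc, div_lt_iff₀ hr0]
    linarith
  linarith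

theorem isCompact_ball_eval (N : ℝ) : IsCompact {x : Fin n → ℝ | 0 ≤ MvPolynomial.eval x
    (MvPolynomial.C N - ∑ i, MvPolynomial.X i ^ 2 : MvPolynomial (Fin n) ℝ)} := by
  refine (isCompact_Icc (a := fun _ : Fin n => -(N + 1)) (b := fun _ => N + 1)).of_isClosed_subset
    (isClosed_le continuous_const (MvPolynomial.continuous_eval _)) fun x hx => ?_
  have hx : 0 ≤ MvPolynomial.eval x
    (MvPolynomial.C N - ∑ i, MvPolynomial.X i ^ 2 : MvPolynomial (Fin n) ℝ) := hx
  rw [map_sub, eval_sum_X_sq, MvPolynomial.eval_C] at hx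
  have h : ∀ i, x i ^ 2 ≤ N := fun i =>
    (Finset.single_le_sum (f := fun i => x i ^ 2) (fun i _ => sq_nonneg _)
      (Finset.mem_univ i)).trans (by linarith)
  exact ⟨fun i => by nlinarith [h i, sq_nonneg (x i + 1), sq_nonneg (x i)],
    fun i => by nlinarith [h i, sq_nonneg (x i - 1), sq_nonneg (x i)]⟩

end

end

/-- **Putinar's Positivstellensatz.** Let `K = {x : ∀ j, kⱼ(x) ≥ 0}` be compact and let
`Q` be the quadratic module generated by the `kⱼ`. If some `μ ∈ Q` has compact nonnegativity
set, then every polynomial strictly positive on `K` belongs to `Q`. -/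
theorem stmt_1 {n m : ℕ} (k : Fin m → MvPolynomial (Fin n) ℝ)
    (K : Set (Fin n → ℝ))
    (hK : K = {x : Fin n → ℝ | ∀ j : Fin m, 0 ≤ MvPolynomial.eval x (k j)})
    (hKcomp : IsCompact K)
    (Q : Set (MvPolynomial (Fin n) ℝ))
    (hQ : Q = {q : MvPolynomial (Fin n) ℝ |
      ∃ (σ₀ : MvPolynomial (Fin n) ℝ) (σ : Fin m → MvPolynomial (Fin n) ℝ),
        IsSOS σ₀ ∧ (∀ j : Fin m, IsSOS (σ j)) ∧ q = σ₀ + ∑ j : Fin m, σ j * k j})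
    (μ : MvPolynomial (Fin n) ℝ) (hμQ : μ ∈ Q)
    (hμcomp : IsCompact {x : Fin n → ℝ | 0 ≤ MvPolynomial.eval x μ})
    (p : MvPolynomial (Fin n) ℝ) (hp : ∀ x ∈ K, 0 < MvPolynomial.eval x p) :
    p ∈ Q := by
  have hmemQ : ∀ q, q ∈ Q ↔ ∃ (σ₀ : MvPolynomial (Fin n) ℝ) (σ : Fin m → MvPolynomial (Fin n) ℝ),
      IsSOS σ₀ ∧ (∀ j : Fin m, IsSOS (σ j)) ∧ q = σ₀ + ∑ j : Fin m, σ j * k j := fun q => by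
    rw [hQ]; rfl
  have h0 : IsSOS (0 : MvPolynomial (Fin n) ℝ) := (sosSemiring n).zero_mem
  have hSQ : ∀ s, IsSOS s → s ∈ Q := fun s hs =>
    (hmemQ _).2 ⟨s, fun _ => 0, hs, fun _ => h0, by simp⟩
  have hadd : ∀ a ∈ Q, ∀ b ∈ Q, a + b ∈ Q := by
    intro a ha b hb
    obtain ⟨s, σ, hs, hσ, rfl⟩ := (hmemQ _).1 ha
    obtain ⟨t, τ, ht, hτ, rfl⟩ := (hmemQ _).1 hb
    refine (hmemQ _).2 ⟨s + t, fun j => σ j + τ j, hs.add ht, fun j => (hσ j).add (hτ j), ?_⟩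
    simp only [add_mul, Finset.sum_add_distrib]
    ring
  have hmul : ∀ s, IsSOS s → ∀ a ∈ Q, a * s ∈ Q := by
    intro s hs a ha
    obtain ⟨t, τ, ht, hτ, rfl⟩ := (hmemQ _).1 ha
    refine (hmemQ _).2 ⟨s * t, fun j => s * τ j, hs.mul ht, fun j => hs.mul (hτ j), ?_⟩
    simp only [add_mul, Finset.sum_mul]
    rw [mul_comm t s]
    congr 1
    exact Finset.sum_congr rfl fun j _ => by ring
  have hcone : ∀ g ∈ Q, ∀ f ∈ sosCone g, f ∈ Q := by
    rintro g hg _ ⟨s, hs, t, ht, rfl⟩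
    exact hadd _ (hSQ s hs) _ (hmul t ht g hg)
  obtain ⟨N, hN⟩ := exists_ball_mem_sosCone μ hμcomp
  have hNQ := hcone μ hμQ _ hN
  have hB := isCompact_ball_eval (n := n) N
  -- rescale the constraints so that they are bounded by `1` on the ball
  obtain ⟨c, hc, hck⟩ : ∃ c : ℝ, 0 < c ∧ ∀ j, ∀ x ∈ {x : Fin n → ℝ | 0 ≤ MvPolynomial.eval x
      (MvPolynomial.C N - ∑ i, MvPolynomial.X i ^ 2 : MvPolynomial (Fin n) ℝ)},
      |c * MvPolynomial.eval x (k j)| ≤ 1 := by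
    choose M hM using fun j => hB.exists_bound_of_continuousOn
      (MvPolynomial.continuous_eval (k j)).continuousOn
    have hpos : 0 < 1 + ∑ j, |M j| := by positivity
    refine ⟨(1 + ∑ j, |M j|)⁻¹, inv_pos.2 hpos, fun j x hx => ?_⟩
    rw [abs_mul, abs_of_pos (inv_pos.2 hpos), inv_mul_le_one₀ hpos]
    have h1 := hM j x hx
    rw [Real.norm_eq_abs] at h1
    have h2 := Finset.single_le_sum (f := fun j => |M j|) (fun j _ => abs_nonneg _)
      (Finset.mem_univ j)
    linarith [le_abs_self (M j)]
  obtain ⟨l, r, hl, hpos⟩ := exists_pos_on_compact hB (fun x => MvPolynomial.eval x p)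
    (fun j x => c * MvPolynomial.eval x (k j)) (MvPolynomial.continuous_eval p)
    (fun j => continuous_const.mul (MvPolynomial.continuous_eval (k j))) hck
    (fun x _ hx => hp x (by
      rw [hK]
      exact fun j => nonneg_of_mul_nonneg_right (hx j) hc))
  let τ : Fin m → MvPolynomial (Fin n) ℝ := fun j =>
    MvPolynomial.C (l * c) * (1 - MvPolynomial.C c * k j) ^ (2 * r)
  have hτ : ∀ j, IsSOS (τ j) := fun j => by
    refine (IsSOS.of_const (mul_nonneg hl hc.le)).mul ?_
    rw [mul_comm 2 r, pow_mul]
    exact IsSOS.of_sq _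
  have hf : p - ∑ j, τ j * k j ∈ Q := by
    refine hcone _ hNQ _ (mem_sosCone_of_pos_on_ball N _ fun x hx => ?_)
    have := hpos x hx
    rw [Finset.mul_sum] at this
    convert this using 2
    simp only [τ, map_sum, map_mul, map_sub, map_pow, map_one, MvPolynomial.eval_C]
    congr 1
    exact Finset.sum_congr rfl fun j _ => by ring
  have := hadd _ hf _ ((hmemQ _).2 ⟨0, τ, h0, hτ, (zero_add _).symm⟩)
  rwa [sub_add_cancel] at this
end

section
/- (Proposition 1, Boundedness.) Fix λ ∈ Λ. Let ζ*(λ) be a constant such that for all x ∈ X and δ ∈ D, |x − x₀(λ,δ)| ≤ Δ implies Ψ(x,λ) ≤ ζ*(λ), and let ν*(λ) be a constant such that for all x ∈ X and δ ∈ D, Ψ(x,λ) ≤ ζ*(λ) implies |x − x₀(λ,δ)| ≤ ν*(λ). Suppose the uncertainties are sufficiently weak, i.e., Δ < Γ − ν*(λ) and ζ*(λ) < Γ_Ψ(λ). Then for every ν with ν*(λ) + Δ < ν ≤ Γ there exists ξ > 0 such that every trajectory (x, δ) with |x(0)| ≤ ξ satisfies |x(t)| ≤ ν for all t ≥ 0.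 -/
/-!
Along a trajectory, `t ↦ Ψ (x t) lam` has derivative `⟪∇Ψ, f⟫ ≤ -φ₂ ≤ 0`, so it never exceeds
its initial value (`lyapunov_le_initial`); the trajectory is assumed to stay in `X`, so no
continuation argument is needed. Since `‖0 - x₀‖ ≤ Δ`, one has `Ψ 0 lam ≤ ζ*`, and the sublevel
set at height `ζ*` lies in the ball of radius `ν* + Δ < ν`. As `Ψ 0 lam = ζ*` is possible, points
near `0` may lie slightly above that height; compactness of the sublevel set at height
`ΓΨ lam > ζ*` gives some `c > ζ*` whose strict sublevel set is still in the ball of radius `ν`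
(`exists_sublevel_subset_ball`). Continuity of `Ψ` at `0` then yields `ξ`.
-/

open scoped RealInnerProductSpace

/-- A height `b` whose sublevel set lies in the open ball of radius `r` can be raised slightly
without leaving the ball, provided a higher sublevel set is bounded. -/
theorem exists_sublevel_subset_ball {n : ℕ} (V : EuclideanSpace ℝ (Fin n) → ℝ)
    (hV : Continuous V) (b G R r : ℝ) (hbG : b < G) (hR : ∀ x, V x ≤ G → ‖x‖ ≤ R)
    (hr : ∀ x, V x ≤ b → ‖x‖ < r) : ∃ c > b, ∀ x, V x < c → ‖x‖ < r := by
  have hK : IsCompact {x | V x ≤ G ∧ r ≤ ‖x‖} := by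
    refine (isCompact_closedBall (0 : EuclideanSpace ℝ (Fin n)) R).of_isClosed_subset
      ((isClosed_le hV continuous_const).inter (isClosed_le continuous_const continuous_norm)) ?_
    intro x hx
    simpa using hR x hx.1
  rcases Set.eq_empty_or_nonempty {x | V x ≤ G ∧ r ≤ ‖x‖} with he | hne
  · refine ⟨G, hbG, fun x hx => ?_⟩
    by_contra! h
    have : x ∈ {x | V x ≤ G ∧ r ≤ ‖x‖} := ⟨hx.le, h⟩
    simp [he] at this
  · obtain ⟨m, hm, hmin⟩ := hK.exists_isMinOn hne hV.continuousOn
    have hbm : b < V m := by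
      by_contra! h
      exact absurd (hr m h) (not_lt.mpr hm.2)
    refine ⟨min (V m) G, lt_min hbm hbG, fun x hx => ?_⟩
    by_contra! h
    have := isMinOn_iff.mp hmin x ⟨(hx.trans_le (min_le_right _ _)).le, h⟩
    exact absurd (hx.trans_le (min_le_left _ _)) (not_lt.mpr this)

theorem lyapunov_le_initial {n : ℕ} (V : EuclideanSpace ℝ (Fin n) → ℝ)
    (hV : Differentiable ℝ V) (x v : ℝ → EuclideanSpace ℝ (Fin n))
    (hx : ∀ t, 0 ≤ t → HasDerivAt x (v t) t)
    (hdec : ∀ t, 0 ≤ t → ⟪gradient V (x t), v t⟫ ≤ 0) (t : ℝ) (ht : 0 ≤ t) :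
    V (x t) ≤ V (x 0) := by
  have hd : ∀ s, 0 ≤ s → HasDerivAt (fun s => V (x s)) ⟪gradient V (x s), v s⟫ s := by
    intro s hs
    have h := (hV (x s)).hasGradientAt.hasFDerivAt.comp_hasDerivAt s (hx s hs)
    exact h
  have hanti : AntitoneOn (fun s => V (x s)) (Set.Ici 0) := by
    refine antitoneOn_of_deriv_nonpos (convex_Ici 0)
      (fun s hs => (hd s hs).continuousAt.continuousWithinAt) ?_ ?_
    · intro s hs
      rw [interior_Ici] at hs
      exact (hd s hs.le).differentiableAt.differentiableWithinAt
    · intro s hs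
      rw [interior_Ici] at hs
      rw [(hd s hs.le).deriv]
      exact hdec s hs.le
  exact hanti Set.self_mem_Ici ht ht

/-- **Proposition 1 (Boundedness).** For the uncertain parametric system `ẋ = f(x, λ, δ(t))`
satisfying Assumptions 1 and 2, if the uncertainties are sufficiently weak
(`Δ < Γ − ν*(λ)` and `ζ*(λ) < Γ_Ψ(λ)`), then for every `ν ∈ (ν*(λ)+Δ, Γ]` there exists
`ξ > 0` such that every trajectory starting with `|x(0)| ≤ ξ` satisfies `|x(t)| ≤ ν`
for all `t ≥ 0`. -/
theorem stmt_3 {n l d : ℕ}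
    (f : EuclideanSpace ℝ (Fin n) → (Fin l → ℝ) → (Fin d → ℝ) → EuclideanSpace ℝ (Fin n))
    (X : Set (EuclideanSpace ℝ (Fin n))) (Λ : Set (Fin l → ℝ)) (D : Set (Fin d → ℝ))
    (hX0 : (0 : EuclideanSpace ℝ (Fin n)) ∈ X) (hD0 : (0 : Fin d → ℝ) ∈ D)
    (hf : ∀ lam ∈ Λ, ∀ δ ∈ D, LocallyLipschitz (fun x => f x lam δ))
    -- Assumption 1
    (Δ : ℝ) (hΔpos : 0 < Δ)
    (hΔX : {x : EuclideanSpace ℝ (Fin n) | ‖x‖ ≤ Δ} ⊆ X)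
    (x₀ : (Fin l → ℝ) → (Fin d → ℝ) → EuclideanSpace ℝ (Fin n))
    (hx₀eq : ∀ lam ∈ Λ, ∀ δ ∈ D, f (x₀ lam δ) lam δ = 0)
    (hx₀bd : ∀ lam ∈ Λ, ∀ δ ∈ D, ‖x₀ lam δ‖ ≤ Δ)
    -- Assumption 2
    (Ψ : EuclideanSpace ℝ (Fin n) → (Fin l → ℝ) → ℝ)
    (φ₁ φ₂ : EuclideanSpace ℝ (Fin n) → ℝ)
    (hΨc : ∀ lam ∈ Λ, ContDiff ℝ 1 (fun x => Ψ x lam))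
    (hφ₁c : Continuous φ₁) (hφ₁0 : φ₁ 0 = 0)
    (hφ₁pos : ∀ y : EuclideanSpace ℝ (Fin n), y ≠ 0 → 0 < φ₁ y)
    (hφ₁rad : ∀ M : ℝ, ∃ R : ℝ, ∀ y : EuclideanSpace ℝ (Fin n), R ≤ ‖y‖ → M ≤ φ₁ y)
    (hφ₂c : Continuous φ₂) (hφ₂0 : φ₂ 0 = 0)
    (hφ₂pos : ∀ y : EuclideanSpace ℝ (Fin n), y ≠ 0 → 0 < φ₂ y)
    (hΨlb : ∀ x ∈ X, ∀ lam ∈ Λ, ∀ δ ∈ D, φ₁ (x - x₀ lam δ) ≤ Ψ x lam)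
    (hΨdec : ∀ x ∈ X, ∀ lam ∈ Λ, ∀ δ ∈ D,
      ⟪gradient (fun y => Ψ y lam) x, f x lam δ⟫ ≤ -φ₂ (x - x₀ lam δ))
    -- level sets
    (Γ : ℝ) (hΓpos : 0 < Γ)
    (hΓX : {x : EuclideanSpace ℝ (Fin n) | ‖x‖ ≤ Γ} ⊆ X)
    (ΓΨ : (Fin l → ℝ) → ℝ) (hΓΨpos : ∀ lam ∈ Λ, 0 < ΓΨ lam)
    (hΓΨX : ∀ lam ∈ Λ, ∀ x : EuclideanSpace ℝ (Fin n), Ψ x lam ≤ ΓΨ lam → x ∈ X)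
    -- Fix λ and the constants ζ*(λ), ν*(λ)
    (lam : Fin l → ℝ) (hlam : lam ∈ Λ)
    (ζstar νstar : ℝ)
    (hζstar : ∀ x ∈ X, ∀ δ ∈ D, ‖x - x₀ lam δ‖ ≤ Δ → Ψ x lam ≤ ζstar)
    (hνstar : ∀ x ∈ X, ∀ δ ∈ D, Ψ x lam ≤ ζstar → ‖x - x₀ lam δ‖ ≤ νstar)
    -- sufficiently weak uncertainties
    (hweak1 : Δ < Γ - νstar) (hweak2 : ζstar < ΓΨ lam) :
    ∀ ν : ℝ, νstar + Δ < ν → ν ≤ Γ →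
      ∃ ξ > (0 : ℝ), ∀ (x : ℝ → EuclideanSpace ℝ (Fin n)) (δ : ℝ → (Fin d → ℝ)),
        ContinuousOn δ (Set.Ici 0) → (∀ t : ℝ, 0 ≤ t → δ t ∈ D) →
        (∀ t : ℝ, 0 ≤ t → x t ∈ X ∧ HasDerivAt x (f (x t) lam (δ t)) t) →
        ‖x 0‖ ≤ ξ → ∀ t : ℝ, 0 ≤ t → ‖x t‖ ≤ ν := by
  intro ν hν _
  have hVc : Continuous (fun y => Ψ y lam) := (hΨc lam hlam).continuous
  have hbd := hx₀bd lam hlam 0 hD0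
  have htri : ∀ y, ‖y‖ ≤ ‖y - x₀ lam 0‖ + Δ := fun y => by
    have := norm_add_le (y - x₀ lam 0) (x₀ lam 0)
    rw [sub_add_cancel] at this
    linarith
  obtain ⟨R, hR⟩ := hφ₁rad (ΓΨ lam + 1)
  obtain ⟨c, hc, hcν⟩ := exists_sublevel_subset_ball (fun y => Ψ y lam) hVc ζstar (ΓΨ lam)
    (R + Δ) ν hweak2
    (fun y hy => by
      have h1 := hΨlb y (hΓΨX lam hlam y hy) lam hlam 0 hD0
      have h2 : ‖y - x₀ lam 0‖ < R := by
        by_contra! h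
        have := hR _ h
        linarith
      linarith [htri y])
    (fun y hy => by
      have := hνstar y (hΓΨX lam hlam y (hy.trans hweak2.le)) 0 hD0 hy
      linarith [htri y])
  have h0 : Ψ 0 lam < c := (hζstar 0 hX0 0 hD0 (by simpa using hbd)).trans_lt hc
  obtain ⟨ξ, hξ, hball⟩ := Metric.nhds_basis_closedBall.mem_iff.mp
    (hVc.continuousAt.eventually_lt_const h0)
  refine ⟨ξ, hξ, fun x δ _ hδD hx hx0 t ht => (hcν (x t) ?_).le⟩
  have hφ₂nn : ∀ y, 0 ≤ φ₂ y := fun y => by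
    rcases eq_or_ne y 0 with rfl | h
    · exact hφ₂0.ge
    · exact (hφ₂pos y h).le
  have hle := lyapunov_le_initial (fun y => Ψ y lam) ((hΨc lam hlam).differentiable one_ne_zero)
    x (fun s => f (x s) lam (δ s)) (fun s hs => (hx s hs).2)
    (fun s hs => (hΨdec (x s) (hx s hs).1 lam hlam (δ s) (hδD s hs)).trans
      (neg_nonpos.mpr (hφ₂nn _))) t ht
  have hin : Ψ (x 0) lam < c := hball (by simpa using hx0)
  exact hle.trans_lt hin
end

section
/- (Proposition 2, Convergence.) Fix λ ∈ Λ. Let μ*(λ) ≤ Γ be a constant such that for all x ∈ X and δ ∈ D, |x − x₀(λ,δ)| ≤ μ*(λ) implies Ψ(x,λ) ≤ Γ_Ψ(λ). Assume additionally that for every pair of constants 0 < a < b the infimum inf{ φ₂(x − x₀(λ,δ)) : x ∈ X, δ ∈ D, a ≤ Ψ(x,λ) ≤ b } is strictly positive (so that the minimum κ(λ) used in the proof is positive). Suppose the uncertainties are sufficiently weak, i.e., Δ < μ*(λ)/2. Then for every μ with Δ ≤ μ ≤ μ*(λ) − Δ and every ε with 0 < ε ≤ Γ − Δ there exists a finite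 time T ≥ 0 such that every trajectory (x, δ) with |x(0)| ≤ μ satisfies |x(t)| ≤ ε + Δ for all t ≥ T. -/
/-!
The function `V t = Ψ (x t) λ` is nonincreasing along a trajectory, with `V' ≤ -φ₂ (x - x₀)`, and
`V 0 ≤ Γ_Ψ` because `‖x 0 - x₀‖ ≤ μ + Δ ≤ μ*`. Positive definiteness and radial unboundedness of
`φ₁` give a level `a > 0` such that `Ψ x λ < a` forces `‖x - x₀‖ ≤ ε`, hence `‖x‖ ≤ ε + Δ`
(`exists_pos_lower_bound`). As long as `V ≥ a`, the trajectory lies in the band `a ≤ Ψ ≤ b`, where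
`φ₂ (x - x₀) ≥ κ > 0`, so `V` decreases at rate at least `κ`; starting from at most `b`, it cannot
stay above the positive level `a` up to time `b / κ`, and this time does not depend on the
trajectory.
-/

open scoped RealInnerProductSpace

/-- A continuous, positive definite, radially unbounded function is bounded below by a positive
constant outside each ball around the origin: on the compact shell `ε ≤ ‖y‖ ≤ R` it attains a
positive minimum, and beyond radius `R` it is at least `1`. -/
theorem exists_pos_lower_bound {E : Type*} [NormedAddCommGroup E] [ProperSpace E] {φ : E → ℝ}
    (hc : Continuous φ) (hpos : ∀ y, y ≠ 0 → 0 < φ y)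
    (hrad : ∀ M : ℝ, ∃ R : ℝ, ∀ y, R ≤ ‖y‖ → M ≤ φ y) {ε : ℝ} (hε : 0 < ε) :
    ∃ a : ℝ, 0 < a ∧ ∀ y, ε ≤ ‖y‖ → a ≤ φ y := by
  obtain ⟨R, hR⟩ := hrad 1
  have hK : IsCompact (Metric.closedBall (0 : E) R ∩ {y | ε ≤ ‖y‖}) :=
    (isCompact_closedBall 0 R).inter_right (isClosed_le continuous_const continuous_norm)
  have hφ : ∀ y ∈ Metric.closedBall (0 : E) R ∩ {y | ε ≤ ‖y‖}, 0 < φ y := fun y hy =>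
    hpos y (norm_pos_iff.mp (hε.trans_le hy.2))
  obtain ⟨m, hm, hmin⟩ := hK.exists_forall_le' hc.continuousOn hφ
  refine ⟨min m 1, lt_min hm one_pos, fun y hy => ?_⟩
  rcases le_total ‖y‖ R with h | h
  · exact (min_le_left _ _).trans (hmin y ⟨by simpa using h, hy⟩)
  · exact (min_le_right _ _).trans (hR y h)

/-- Mean value inequality on `[s, t]` for a function whose derivative is at most `-c`. -/
theorem le_sub_mul_of_hasDerivAt_le {V V' : ℝ → ℝ} {c s t : ℝ} (hst : s ≤ t)
    (hV : ∀ r ∈ Set.Icc s t, HasDerivAt V (V' r) r) (hc : ∀ r ∈ Set.Icc s t, V' r ≤ -c) :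
    V t ≤ V s - c * (t - s) := by
  have h := (convex_Icc s t).image_sub_le_mul_sub_of_deriv_le (f := V) (C := -c)
    (fun r hr => (hV r hr).continuousAt.continuousWithinAt)
    (fun r hr => (hV r (interior_subset hr)).differentiableAt.differentiableWithinAt)
    (fun r hr => by
      rw [(hV r (interior_subset hr)).deriv]
      exact hc r (interior_subset hr))
    s ⟨le_rfl, hst⟩ t ⟨hst, le_rfl⟩ hst
  linarith

/-- **Proposition 2 (Convergence).** For the uncertain parametric system `ẋ = f(x, λ, δ(t))`
satisfying Assumptions 1 and 2, with `μ*(λ) ≤ Γ` such that `|x − x₀(λ,δ)| ≤ μ*(λ)` implies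
`Ψ(x,λ) ≤ Γ_Ψ(λ)`, with positive infimum of `φ₂(x − x₀(λ,δ))` on every band
`a ≤ Ψ(x,λ) ≤ b`, and with sufficiently weak uncertainties (`Δ < μ*(λ)/2`), every
trajectory starting with `|x(0)| ≤ μ` (for `μ ∈ [Δ, μ*(λ) − Δ]`) reaches and stays in the
ball of radius `ε + Δ` after some finite time `T`, for every `ε ∈ (0, Γ − Δ]`. -/
theorem stmt_4 {n l d : ℕ}
    (f : EuclideanSpace ℝ (Fin n) → (Fin l → ℝ) → (Fin d → ℝ) → EuclideanSpace ℝ (Fin n))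
    (X : Set (EuclideanSpace ℝ (Fin n))) (Λ : Set (Fin l → ℝ)) (D : Set (Fin d → ℝ))
    (hX0 : (0 : EuclideanSpace ℝ (Fin n)) ∈ X) (hD0 : (0 : Fin d → ℝ) ∈ D)
    (hf : ∀ lam ∈ Λ, ∀ δ ∈ D, LocallyLipschitz (fun x => f x lam δ))
    -- Assumption 1
    (Δ : ℝ) (hΔpos : 0 < Δ)
    (hΔX : {x : EuclideanSpace ℝ (Fin n) | ‖x‖ ≤ Δ} ⊆ X)
    (x₀ : (Fin l → ℝ) → (Fin d → ℝ) → EuclideanSpace ℝ (Fin n))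
    (hx₀eq : ∀ lam ∈ Λ, ∀ δ ∈ D, f (x₀ lam δ) lam δ = 0)
    (hx₀bd : ∀ lam ∈ Λ, ∀ δ ∈ D, ‖x₀ lam δ‖ ≤ Δ)
    -- Assumption 2
    (Ψ : EuclideanSpace ℝ (Fin n) → (Fin l → ℝ) → ℝ)
    (φ₁ φ₂ : EuclideanSpace ℝ (Fin n) → ℝ)
    (hΨc : ∀ lam ∈ Λ, ContDiff ℝ 1 (fun x => Ψ x lam))
    (hφ₁c : Continuous φ₁) (hφ₁0 : φ₁ 0 = 0)
    (hφ₁pos : ∀ y : EuclideanSpace ℝ (Fin n), y ≠ 0 → 0 < φ₁ y)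
    (hφ₁rad : ∀ M : ℝ, ∃ R : ℝ, ∀ y : EuclideanSpace ℝ (Fin n), R ≤ ‖y‖ → M ≤ φ₁ y)
    (hφ₂c : Continuous φ₂) (hφ₂0 : φ₂ 0 = 0)
    (hφ₂pos : ∀ y : EuclideanSpace ℝ (Fin n), y ≠ 0 → 0 < φ₂ y)
    (hΨlb : ∀ x ∈ X, ∀ lam ∈ Λ, ∀ δ ∈ D, φ₁ (x - x₀ lam δ) ≤ Ψ x lam)
    (hΨdec : ∀ x ∈ X, ∀ lam ∈ Λ, ∀ δ ∈ D,
      ⟪gradient (fun y => Ψ y lam) x, f x lam δ⟫ ≤ -φ₂ (x - x₀ lam δ))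
    -- level sets
    (Γ : ℝ) (hΓpos : 0 < Γ)
    (hΓX : {x : EuclideanSpace ℝ (Fin n) | ‖x‖ ≤ Γ} ⊆ X)
    (ΓΨ : (Fin l → ℝ) → ℝ) (hΓΨpos : ∀ lam ∈ Λ, 0 < ΓΨ lam)
    (hΓΨX : ∀ lam ∈ Λ, ∀ x : EuclideanSpace ℝ (Fin n), Ψ x lam ≤ ΓΨ lam → x ∈ X)
    -- Fix λ and the constant μ*(λ)
    (lam : Fin l → ℝ) (hlam : lam ∈ Λ)
    (μstar : ℝ) (hμstarΓ : μstar ≤ Γ)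
    (hμstar : ∀ x ∈ X, ∀ δ ∈ D, ‖x - x₀ lam δ‖ ≤ μstar → Ψ x lam ≤ ΓΨ lam)
    -- positive infimum of φ₂ on Lyapunov bands
    (hκ : ∀ a b : ℝ, 0 < a → a < b →
      ∃ κ > (0 : ℝ), ∀ x ∈ X, ∀ δ ∈ D, a ≤ Ψ x lam → Ψ x lam ≤ b →
        κ ≤ φ₂ (x - x₀ lam δ))
    -- sufficiently weak uncertainties
    (hweak : Δ < μstar / 2) :
    ∀ μ : ℝ, Δ ≤ μ → μ ≤ μstar - Δ → ∀ ε : ℝ, 0 < ε → ε ≤ Γ - Δ →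
      ∃ T : ℝ, 0 ≤ T ∧ ∀ (x : ℝ → EuclideanSpace ℝ (Fin n)) (δ : ℝ → (Fin d → ℝ)),
        ContinuousOn δ (Set.Ici 0) → (∀ t : ℝ, 0 ≤ t → δ t ∈ D) →
        (∀ t : ℝ, 0 ≤ t → x t ∈ X ∧ HasDerivAt x (f (x t) lam (δ t)) t) →
        ‖x 0‖ ≤ μ → ∀ t : ℝ, T ≤ t → ‖x t‖ ≤ ε + Δ := by
  intro μ _ hμ ε hε _
  obtain ⟨a, ha, hφ₁a⟩ := exists_pos_lower_bound hφ₁c hφ₁pos hφ₁rad hε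
  -- The upper level must dominate the initial value of `Ψ` and exceed `a`.
  set b : ℝ := max (ΓΨ lam) (a + 1)
  have hab : a < b := (lt_add_one a).trans_le (le_max_right _ _)
  obtain ⟨κ, hκpos, hκb⟩ := hκ a b ha hab
  refine ⟨b / κ, by have := ha.trans hab; positivity, ?_⟩
  intro x δ _ hδ hx hx0 t hTt
  have ht : 0 ≤ t := le_trans (by have := ha.trans hab; positivity) hTt
  have hV : ∀ r : ℝ, 0 ≤ r → HasDerivAt (fun r => Ψ (x r) lam)
      (⟪gradient (fun y => Ψ y lam) (x r), f (x r) lam (δ r)⟫) r := fun r hr => by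
    have hg : HasGradientAt (fun y => Ψ y lam) (gradient (fun y => Ψ y lam) (x r)) (x r) :=
      (((hΨc lam hlam).differentiable one_ne_zero) (x r)).hasGradientAt
    exact hg.hasFDerivAt.comp_hasDerivAt r (hx r hr).2
  have hφ₂nn : ∀ y, 0 ≤ φ₂ y := fun y => by
    rcases eq_or_ne y 0 with rfl | hy
    · exact hφ₂0.ge
    · exact (hφ₂pos y hy).le
  have hmono : ∀ s u : ℝ, 0 ≤ s → s ≤ u → Ψ (x u) lam ≤ Ψ (x s) lam := fun s u hs hsu => by
    have := le_sub_mul_of_hasDerivAt_le (c := 0) hsu (fun r hr => hV r (hs.trans hr.1))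
      (fun r hr => by
        have hr0 := hs.trans hr.1
        linarith [hΨdec (x r) (hx r hr0).1 lam hlam (δ r) (hδ r hr0),
          hφ₂nn (x r - x₀ lam (δ r))])
    simpa using this
  have hV0 : Ψ (x 0) lam ≤ b := by
    refine (hμstar _ (hx 0 le_rfl).1 (δ 0) (hδ 0 le_rfl) ?_).trans (le_max_left _ _)
    linarith [norm_sub_le (x 0) (x₀ lam (δ 0)), hx₀bd lam hlam (δ 0) (hδ 0 le_rfl)]
  have hVt : Ψ (x t) lam < a := by
    by_contra! hcon
    -- By monotonicity the trajectory stays in the band `a ≤ Ψ ≤ b` on all of `[0, t]`.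
    have h := le_sub_mul_of_hasDerivAt_le (c := κ) ht (fun r hr => hV r hr.1) (fun r hr => by
      linarith [hΨdec (x r) (hx r hr.1).1 lam hlam (δ r) (hδ r hr.1),
        hκb (x r) (hx r hr.1).1 (δ r) (hδ r hr.1) (hcon.trans (hmono r t hr.1 hr.2))
          ((hmono 0 r le_rfl hr.1).trans hV0)])
    have hκt : b ≤ t * κ := (div_le_iff₀ hκpos).mp hTt
    linarith
  have hlt : ‖x t - x₀ lam (δ t)‖ < ε := by
    by_contra! hcon
    linarith [hφ₁a _ hcon, hΨlb (x t) (hx t ht).1 lam hlam (δ t) (hδ t ht)]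
  have htri : ‖x t‖ ≤ ‖x t - x₀ lam (δ t)‖ + ‖x₀ lam (δ t)‖ := by
    simpa using norm_add_le (x t - x₀ lam (δ t)) (x₀ lam (δ t))
  linarith [hx₀bd lam hlam (δ t) (hδ t ht)]
end

section
/- (Main Theorem.) Fix λ ∈ Λ. Let ζ*(λ), ν*(λ), μ*(λ) be constants such that for all x ∈ X and δ ∈ D: |x − x₀(λ,δ)| ≤ Δ implies Ψ(x,λ) ≤ ζ*(λ); Ψ(x,λ) ≤ ζ*(λ) implies |x − x₀(λ,δ)| ≤ ν*(λ); and |x − x₀(λ,δ)| ≤ μ*(λ) implies Ψ(x,λ) ≤ Γ_Ψ(λ), with μ*(λ) ≤ Γ. Assume that for every pair 0 < a < b the infimum inf{ φ₂(x − x₀(λ,δ)) : x ∈ X, δ ∈ D, a ≤ Ψ(x,λ) ≤ b } is strictly positive. Suppose the uncertainties are sufficiently weak, i.e., Δ < min(Γ − ν*(λ), μ*(λ)/2) and ζ*(λ) < Γ_Ψ(λ). Then: (i) for every ν with ν*(λ) + Δ < ν ≤ Γ there exists ξ > 0 such that every trajectory (x, δ) with |x(0)| ≤ ξ satisfies |x(t)|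 ≤ ν for all t ≥ 0; and (ii) for every μ with Δ ≤ μ ≤ μ*(λ) − Δ, every trajectory (x, δ) with |x(0)| ≤ μ satisfies limsup_{t→∞} |x(t)| ≤ Δ. -/
/-! Along a trajectory the chain rule gives `d/dt Ψ(x(t), λ) ≤ -φ₂(x(t) - x₀(λ, δ(t))) ≤ 0`, so `Ψ` never
increases.

For boundedness, every point of the sphere `|x| = ν` lies at distance more than `ν*` from each
`x₀(λ, δ)`, hence `Ψ > ζ*` there; compactness gives a uniform gap above `Ψ(0, λ) ≤ ζ*`, so a
trajectory that starts close to the origin has too little `Ψ` to reach the sphere, and by the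
intermediate value theorem it stays inside (`norm_le_of_lt_on_sphere`).

For convergence, were `Ψ` to stay above some `a > 0`, then `φ₂ ≥ κ > 0` on the band
`a ≤ Ψ ≤ Ψ(x(0), λ) + 1` would make `Ψ` decrease at rate at least `κ`, contradicting `Ψ ≥ φ₁ ≥ 0`
(`decay_of_hasDerivAt`). Thus `Ψ → 0`, and as `φ₁` is positive definite and radially unbounded,
`|x(t) - x₀(λ, δ(t))| → 0` (`exists_norm_lt_of_lt`), while `|x₀| ≤ Δ`. -/

open scoped RealInnerProductSpace

theorem decay_of_hasDerivAt {ψ ψ' : ℝ → ℝ} {c : ℝ}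
    (h : ∀ t, 0 ≤ t → HasDerivAt ψ (ψ' t) t) (hc : ∀ t, 0 ≤ t → ψ' t ≤ -c)
    {t : ℝ} (ht : 0 ≤ t) : ψ t ≤ ψ 0 - c * t := by
  have hd : ∀ s, 0 ≤ s → HasDerivAt (fun s => ψ s + c * s) (ψ' s + c * 1) s := fun s hs =>
    (h s hs).add ((hasDerivAt_id s).const_mul c)
  have hanti : AntitoneOn (fun s => ψ s + c * s) (Set.Ici 0) := by
    apply antitoneOn_of_deriv_nonpos (convex_Ici 0)
    · exact fun s hs => (hd s hs).continuousAt.continuousWithinAt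
    · intro s hs
      rw [interior_Ici] at hs
      exact (hd s (le_of_lt hs)).differentiableAt.differentiableWithinAt
    · intro s hs
      rw [interior_Ici] at hs
      rw [(hd s (le_of_lt hs)).deriv]
      linarith [hc s (le_of_lt hs)]
  have := hanti (Set.mem_Ici.2 le_rfl) (Set.mem_Ici.2 ht) ht
  simp only [mul_zero, add_zero] at this
  linarith

/-- Small values of a positive definite radially unbounded function force small arguments. Radial
unboundedness handles large arguments, compactness of an annulus the remaining ones. -/
theorem exists_norm_lt_of_lt {E : Type*} [NormedAddCommGroup E] [ProperSpace E]
    {φ : E → ℝ} (hc : Continuous φ) (hpos : ∀ y, y ≠ 0 → 0 < φ y)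
    (hrad : ∀ M : ℝ, ∃ R : ℝ, ∀ y, R ≤ ‖y‖ → M ≤ φ y) {ε : ℝ} (hε : 0 < ε) :
    ∃ η > 0, ∀ y, φ y < η → ‖y‖ < ε := by
  obtain ⟨R, hR⟩ := hrad 1
  let K : Set E := Metric.closedBall 0 R ∩ {y | ε ≤ ‖y‖}
  have hK : IsCompact K :=
    (isCompact_closedBall 0 R).inter_right (isClosed_le continuous_const continuous_norm)
  obtain ⟨m, hm, hmK⟩ : ∃ m > 0, ∀ y ∈ K, m ≤ φ y := by
    apply hK.exists_forall_le' hc.continuousOn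
    rintro y ⟨-, hy⟩
    exact hpos y (norm_pos_iff.1 (hε.trans_le hy))
  refine ⟨min 1 m, lt_min one_pos hm, fun y hy => ?_⟩
  by_contra! hεy
  rcases le_total R ‖y‖ with h | h
  · exact absurd (hR y h) (not_le.2 (hy.trans_le (min_le_left _ _)))
  · exact absurd (hmK y ⟨by simpa using h, hεy⟩) (not_le.2 (hy.trans_le (min_le_right _ _)))

/-- A curve along which `V` stays below its values on the sphere of radius `ν` cannot leave the
ball of radius `ν`. -/
theorem norm_le_of_lt_on_sphere {E : Type*} [NormedAddCommGroup E] {V : E → ℝ} {x : ℝ → E}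
    {ν m : ℝ} (hx : ContinuousOn x (Set.Ici 0)) (hV : ∀ t, 0 ≤ t → V (x t) < m)
    (hm : ∀ y, ‖y‖ = ν → m ≤ V y) (h0 : ‖x 0‖ ≤ ν) {t : ℝ} (ht : 0 ≤ t) : ‖x t‖ ≤ ν := by
  by_contra! hlt
  have hcont : ContinuousOn (fun s => ‖x s‖) (Set.Icc 0 t) :=
    (hx.mono Set.Icc_subset_Ici_self).norm
  obtain ⟨s, hs, hsν⟩ := intermediate_value_Icc ht hcont ⟨h0, hlt.le⟩
  exact absurd (hm _ hsν) (not_le.2 (hV s hs.1))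

/-- **Main Theorem.** Under Assumptions 1 and 2, with constants `ζ*(λ)`, `ν*(λ)`,
`μ*(λ) ≤ Γ` as in Propositions 1 and 2, positive infimum of `φ₂(x − x₀(λ,δ))` on every
Lyapunov band, and sufficiently weak uncertainties
(`Δ < min(Γ − ν*(λ), μ*(λ)/2)` and `ζ*(λ) < Γ_Ψ(λ)`), the system satisfies:
(i) boundedness — for every `ν ∈ (ν*(λ)+Δ, Γ]` there is `ξ > 0` with `|x(0)| ≤ ξ` implying
`|x(t)| ≤ ν` for all `t ≥ 0`; and (ii) uniform asymptotic convergence — for every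
`μ ∈ [Δ, μ*(λ) − Δ]`, `|x(0)| ≤ μ` implies `limsup_{t→∞} |x(t)| ≤ Δ`. -/
theorem stmt_5 {n l d : ℕ}
    (f : EuclideanSpace ℝ (Fin n) → (Fin l → ℝ) → (Fin d → ℝ) → EuclideanSpace ℝ (Fin n))
    (X : Set (EuclideanSpace ℝ (Fin n))) (Λ : Set (Fin l → ℝ)) (D : Set (Fin d → ℝ))
    (hX0 : (0 : EuclideanSpace ℝ (Fin n)) ∈ X) (hD0 : (0 : Fin d → ℝ) ∈ D)
    (hf : ∀ lam ∈ Λ, ∀ δ ∈ D, LocallyLipschitz (fun x => f x lam δ))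
    -- Assumption 1
    (Δ : ℝ) (hΔpos : 0 < Δ)
    (hΔX : {x : EuclideanSpace ℝ (Fin n) | ‖x‖ ≤ Δ} ⊆ X)
    (x₀ : (Fin l → ℝ) → (Fin d → ℝ) → EuclideanSpace ℝ (Fin n))
    (hx₀eq : ∀ lam ∈ Λ, ∀ δ ∈ D, f (x₀ lam δ) lam δ = 0)
    (hx₀bd : ∀ lam ∈ Λ, ∀ δ ∈ D, ‖x₀ lam δ‖ ≤ Δ)
    -- Assumption 2
    (Ψ : EuclideanSpace ℝ (Fin n) → (Fin l → ℝ) → ℝ)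
    (φ₁ φ₂ : EuclideanSpace ℝ (Fin n) → ℝ)
    (hΨc : ∀ lam ∈ Λ, ContDiff ℝ 1 (fun x => Ψ x lam))
    (hφ₁c : Continuous φ₁) (hφ₁0 : φ₁ 0 = 0)
    (hφ₁pos : ∀ y : EuclideanSpace ℝ (Fin n), y ≠ 0 → 0 < φ₁ y)
    (hφ₁rad : ∀ M : ℝ, ∃ R : ℝ, ∀ y : EuclideanSpace ℝ (Fin n), R ≤ ‖y‖ → M ≤ φ₁ y)
    (hφ₂c : Continuous φ₂) (hφ₂0 : φ₂ 0 = 0)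
    (hφ₂pos : ∀ y : EuclideanSpace ℝ (Fin n), y ≠ 0 → 0 < φ₂ y)
    (hΨlb : ∀ x ∈ X, ∀ lam ∈ Λ, ∀ δ ∈ D, φ₁ (x - x₀ lam δ) ≤ Ψ x lam)
    (hΨdec : ∀ x ∈ X, ∀ lam ∈ Λ, ∀ δ ∈ D,
      ⟪gradient (fun y => Ψ y lam) x, f x lam δ⟫ ≤ -φ₂ (x - x₀ lam δ))
    -- level sets
    (Γ : ℝ) (hΓpos : 0 < Γ)
    (hΓX : {x : EuclideanSpace ℝ (Fin n) | ‖x‖ ≤ Γ} ⊆ X)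
    (ΓΨ : (Fin l → ℝ) → ℝ) (hΓΨpos : ∀ lam ∈ Λ, 0 < ΓΨ lam)
    (hΓΨX : ∀ lam ∈ Λ, ∀ x : EuclideanSpace ℝ (Fin n), Ψ x lam ≤ ΓΨ lam → x ∈ X)
    -- Fix λ and the constants ζ*(λ), ν*(λ), μ*(λ)
    (lam : Fin l → ℝ) (hlam : lam ∈ Λ)
    (ζstar νstar μstar : ℝ) (hμstarΓ : μstar ≤ Γ)
    (hζstar : ∀ x ∈ X, ∀ δ ∈ D, ‖x - x₀ lam δ‖ ≤ Δ → Ψ x lam ≤ ζstar)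
    (hνstar : ∀ x ∈ X, ∀ δ ∈ D, Ψ x lam ≤ ζstar → ‖x - x₀ lam δ‖ ≤ νstar)
    (hμstar : ∀ x ∈ X, ∀ δ ∈ D, ‖x - x₀ lam δ‖ ≤ μstar → Ψ x lam ≤ ΓΨ lam)
    -- positive infimum of φ₂ on Lyapunov bands
    (hκ : ∀ a b : ℝ, 0 < a → a < b →
      ∃ κ > (0 : ℝ), ∀ x ∈ X, ∀ δ ∈ D, a ≤ Ψ x lam → Ψ x lam ≤ b →
        κ ≤ φ₂ (x - x₀ lam δ))
    -- sufficiently weak uncertainties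
    (hweak1 : Δ < min (Γ - νstar) (μstar / 2)) (hweak2 : ζstar < ΓΨ lam) :
    (∀ ν : ℝ, νstar + Δ < ν → ν ≤ Γ →
      ∃ ξ > (0 : ℝ), ∀ (x : ℝ → EuclideanSpace ℝ (Fin n)) (δ : ℝ → (Fin d → ℝ)),
        ContinuousOn δ (Set.Ici 0) → (∀ t : ℝ, 0 ≤ t → δ t ∈ D) →
        (∀ t : ℝ, 0 ≤ t → x t ∈ X ∧ HasDerivAt x (f (x t) lam (δ t)) t) →
        ‖x 0‖ ≤ ξ → ∀ t : ℝ, 0 ≤ t → ‖x t‖ ≤ ν) ∧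
    (∀ μ : ℝ, Δ ≤ μ → μ ≤ μstar - Δ →
      ∀ (x : ℝ → EuclideanSpace ℝ (Fin n)) (δ : ℝ → (Fin d → ℝ)),
        ContinuousOn δ (Set.Ici 0) → (∀ t : ℝ, 0 ≤ t → δ t ∈ D) →
        (∀ t : ℝ, 0 ≤ t → x t ∈ X ∧ HasDerivAt x (f (x t) lam (δ t)) t) →
        ‖x 0‖ ≤ μ →
        Filter.limsup (fun t => ‖x t‖) Filter.atTop ≤ Δ) := by
  have hΨdiff : ∀ y, DifferentiableAt ℝ (fun x => Ψ x lam) y := fun y =>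
    (hΨc lam hlam).differentiable one_ne_zero y
  have hΨcont : Continuous (fun x => Ψ x lam) := (hΨc lam hlam).continuous
  have hφ₁nn : ∀ y, 0 ≤ φ₁ y := fun y => by
    by_cases h : y = 0
    · rw [h, hφ₁0]
    · exact (hφ₁pos y h).le
  have hφ₂nn : ∀ y, 0 ≤ φ₂ y := fun y => by
    by_cases h : y = 0
    · rw [h, hφ₂0]
    · exact (hφ₂pos y h).le
  have hderiv : ∀ (x : ℝ → EuclideanSpace ℝ (Fin n)) (v : EuclideanSpace ℝ (Fin n)) (t : ℝ),
      HasDerivAt x v t → HasDerivAt (fun s => Ψ (x s) lam)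
        ⟪gradient (fun y => Ψ y lam) (x t), v⟫ t := by
    intro x v t hx
    have h := (hΨdiff (x t)).hasGradientAt.hasFDerivAt.comp_hasDerivAt t hx
    simpa [Function.comp_def] using h
  have hmono : ∀ (x : ℝ → EuclideanSpace ℝ (Fin n)) (δ : ℝ → (Fin d → ℝ)),
      (∀ t : ℝ, 0 ≤ t → δ t ∈ D) →
      (∀ t : ℝ, 0 ≤ t → x t ∈ X ∧ HasDerivAt x (f (x t) lam (δ t)) t) →
      ∀ c : ℝ, (∀ t, 0 ≤ t → c ≤ φ₂ (x t - x₀ lam (δ t))) →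
      ∀ t, 0 ≤ t → Ψ (x t) lam ≤ Ψ (x 0) lam - c * t := by
    intro x δ hδ hx c hc t ht
    exact decay_of_hasDerivAt (ψ := fun s => Ψ (x s) lam) (fun s hs => hderiv x _ s (hx s hs).2)
      (fun s hs => (hΨdec _ (hx s hs).1 lam hlam _ (hδ s hs)).trans
        (neg_le_neg (hc s hs))) ht
  constructor
  · intro ν hν hνΓ
    -- The origin itself is within `Δ` of every equilibrium.
    have hΨ0 : Ψ 0 lam ≤ ζstar := hζstar 0 hX0 0 hD0 (by simpa using hx₀bd lam hlam 0 hD0)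
    have hν0 : 0 < ν := by
      linarith [norm_nonneg (0 - x₀ lam 0), hνstar 0 hX0 0 hD0 hΨ0]
    obtain ⟨m, hm, hmS⟩ : ∃ m > ζstar, ∀ y ∈ Metric.sphere (0 : EuclideanSpace ℝ (Fin n)) ν,
        m ≤ Ψ y lam := by
      apply (isCompact_sphere _ _).exists_forall_le' hΨcont.continuousOn
      intro y hy
      rw [mem_sphere_zero_iff_norm] at hy
      by_contra! hle
      have h1 := hνstar y (hΓX (hy.le.trans hνΓ)) 0 hD0 hle
      have h2 := norm_sub_norm_le y (x₀ lam 0)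
      linarith [hx₀bd lam hlam 0 hD0]
    have hnear : ∀ᶠ y in nhds (0 : EuclideanSpace ℝ (Fin n)), Ψ y lam < m :=
      hΨcont.continuousAt.eventually_lt continuousAt_const (hΨ0.trans_lt hm)
    obtain ⟨r, hr, hrm⟩ := Metric.eventually_nhds_iff.1 hnear
    refine ⟨min (r / 2) ν, lt_min (half_pos hr) hν0, fun x δ _ hδ hx hx0 t ht => ?_⟩
    have hstart : Ψ (x 0) lam < m :=
      hrm (by rw [dist_zero_right]; linarith [hx0.trans (min_le_left _ _)])
    refine norm_le_of_lt_on_sphere (V := fun y => Ψ y lam) (m := m)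
      (fun s hs => (hx s hs).2.continuousAt.continuousWithinAt) (fun s hs => ?_)
      (fun y hy => hmS y (by simpa using hy)) (hx0.trans (min_le_right _ _)) ht
    have := hmono x δ hδ hx 0 (fun s _ => hφ₂nn _) s hs
    linarith
  · intro μ _ _ x δ _ hδ hx _
    have hnn : ∀ t, 0 ≤ t → 0 ≤ Ψ (x t) lam := fun t ht =>
      (hφ₁nn _).trans (hΨlb _ (hx t ht).1 lam hlam _ (hδ t ht))
    have hle0 : ∀ t, 0 ≤ t → Ψ (x t) lam ≤ Ψ (x 0) lam := fun t ht => by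
      linarith [hmono x δ hδ hx 0 (fun s _ => hφ₂nn _) t ht]
    have hsmall : ∀ a > 0, ∃ t, 0 ≤ t ∧ Ψ (x t) lam < a := by
      intro a ha
      by_contra! hge
      obtain ⟨κ, hκ0, hκφ⟩ := hκ a (Ψ (x 0) lam + 1) ha (by linarith [hge 0 le_rfl])
      -- At this time the decay bound equals `-1`, below the lower bound `0` of `Ψ`.
      have hT : 0 ≤ (Ψ (x 0) lam + 1) / κ := by
        have := hnn 0 le_rfl
        positivity
      have h1 := hmono x δ hδ hx κ (fun s hs => hκφ _ (hx s hs).1 _ (hδ s hs) (hge s hs)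
        (by linarith [hle0 s hs])) _ hT
      rw [mul_div_cancel₀ _ hκ0.ne'] at h1
      linarith [hnn _ hT]
    refine le_of_forall_pos_le_add fun ε hε => ?_
    obtain ⟨η, hη, hηφ⟩ := exists_norm_lt_of_lt hφ₁c hφ₁pos hφ₁rad hε
    obtain ⟨T, hT, hTη⟩ := hsmall η hη
    have hbound : ∀ᶠ t in Filter.atTop, ‖x t‖ ≤ Δ + ε := by
      filter_upwards [Filter.eventually_ge_atTop T] with t ht
      have ht0 : 0 ≤ t := hT.trans ht
      have h1 : Ψ (x t) lam ≤ Ψ (x T) lam := by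
        -- Monotonicity between `T` and `t` is the decay bound for the trajectory shifted by `T`.
        have h := hmono (fun s => x (s + T)) (fun s => δ (s + T))
          (fun s hs => hδ _ (add_nonneg hs hT))
          (fun s hs => ⟨(hx _ (add_nonneg hs hT)).1,
            (hx _ (add_nonneg hs hT)).2.comp_add_const s T⟩)
          0 (fun s _ => hφ₂nn _) (t - T) (sub_nonneg.2 ht)
        simpa using h
      have h2 := hηφ _ ((hΨlb _ (hx t ht0).1 lam hlam _ (hδ t ht0)).trans_lt (h1.trans_lt hTη))
      have h3 := norm_sub_norm_le (x t) (x₀ lam (δ t))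
      linarith [hx₀bd lam hlam _ (hδ t ht0)]
    -- The lower bound `0` makes the real-valued `limsup` genuine.
    exact Filter.limsup_le_of_le
      (Filter.isCoboundedUnder_le_of_le Filter.atTop (x := 0) fun t => norm_nonneg (x t)) hbound
end

section
/- Fix λ ∈ Λ. Let ζ*(λ) be a constant such that for all x ∈ X and δ ∈ D, |x − x₀(λ,δ)| ≤ Δ implies Ψ(x,λ) ≤ ζ*(λ), and let ν*(λ) be a constant such that for all x ∈ X and δ ∈ D, Ψ(x,λ) ≤ ζ*(λ) implies |x − x₀(λ,δ)| ≤ ν*(λ). Then every trajectory (x, δ) with x(0) = 0 satisfies |x(t)| ≤ ν*(λ) + Δ for all t ≥ 0; in particular, if Δ < Γ − ν*(λ), then |x(t)| < Γ for all t ≥ 0. -/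
/-!
`Ψ (·, lam)` is a Lyapunov function common to all values of the uncertainty: along a trajectory its
derivative is at most `-φ₂ ≤ 0`, by the chain rule, whatever `δ` does. Hence `Ψ` never rises above
its value at the origin, which is at most `ζ*` since the origin is within `Δ` of an equilibrium.
So `x t` stays in the `ζ*`-sublevel set, hence within `ν*` of the current equilibrium
`x₀ lam (δ t)`, whose norm is at most `Δ`; the triangle inequality concludes.
-/

open scoped RealInnerProductSpace

/-- Trajectories starting at the origin remain in the ball of radius `ν*(λ) + Δ`; in
particular, if `Δ < Γ − ν*(λ)` they remain strictly inside the ball of radius `Γ`. -/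
theorem stmt_7 {n l d : ℕ}
    (f : EuclideanSpace ℝ (Fin n) → (Fin l → ℝ) → (Fin d → ℝ) → EuclideanSpace ℝ (Fin n))
    (X : Set (EuclideanSpace ℝ (Fin n))) (Λ : Set (Fin l → ℝ)) (D : Set (Fin d → ℝ))
    (hX0 : (0 : EuclideanSpace ℝ (Fin n)) ∈ X) (hD0 : (0 : Fin d → ℝ) ∈ D)
    (hf : ∀ lam ∈ Λ, ∀ δ ∈ D, LocallyLipschitz (fun x => f x lam δ))
    -- Assumption 1
    (Δ : ℝ) (hΔpos : 0 < Δ)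
    (hΔX : {x : EuclideanSpace ℝ (Fin n) | ‖x‖ ≤ Δ} ⊆ X)
    (x₀ : (Fin l → ℝ) → (Fin d → ℝ) → EuclideanSpace ℝ (Fin n))
    (hx₀eq : ∀ lam ∈ Λ, ∀ δ ∈ D, f (x₀ lam δ) lam δ = 0)
    (hx₀bd : ∀ lam ∈ Λ, ∀ δ ∈ D, ‖x₀ lam δ‖ ≤ Δ)
    -- Assumption 2
    (Ψ : EuclideanSpace ℝ (Fin n) → (Fin l → ℝ) → ℝ)
    (φ₁ φ₂ : EuclideanSpace ℝ (Fin n) → ℝ)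
    (hΨc : ∀ lam ∈ Λ, ContDiff ℝ 1 (fun x => Ψ x lam))
    (hφ₁c : Continuous φ₁) (hφ₁0 : φ₁ 0 = 0)
    (hφ₁pos : ∀ y : EuclideanSpace ℝ (Fin n), y ≠ 0 → 0 < φ₁ y)
    (hφ₁rad : ∀ M : ℝ, ∃ R : ℝ, ∀ y : EuclideanSpace ℝ (Fin n), R ≤ ‖y‖ → M ≤ φ₁ y)
    (hφ₂c : Continuous φ₂) (hφ₂0 : φ₂ 0 = 0)
    (hφ₂pos : ∀ y : EuclideanSpace ℝ (Fin n), y ≠ 0 → 0 < φ₂ y)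
    (hΨlb : ∀ x ∈ X, ∀ lam ∈ Λ, ∀ δ ∈ D, φ₁ (x - x₀ lam δ) ≤ Ψ x lam)
    (hΨdec : ∀ x ∈ X, ∀ lam ∈ Λ, ∀ δ ∈ D,
      ⟪gradient (fun y => Ψ y lam) x, f x lam δ⟫ ≤ -φ₂ (x - x₀ lam δ))
    -- level sets
    (Γ : ℝ) (hΓpos : 0 < Γ)
    (hΓX : {x : EuclideanSpace ℝ (Fin n) | ‖x‖ ≤ Γ} ⊆ X)
    -- Fix λ and the constants ζ*(λ), ν*(λ)
    (lam : Fin l → ℝ) (hlam : lam ∈ Λ)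
    (ζstar νstar : ℝ)
    (hζstar : ∀ x ∈ X, ∀ δ ∈ D, ‖x - x₀ lam δ‖ ≤ Δ → Ψ x lam ≤ ζstar)
    (hνstar : ∀ x ∈ X, ∀ δ ∈ D, Ψ x lam ≤ ζstar → ‖x - x₀ lam δ‖ ≤ νstar) :
    ∀ (x : ℝ → EuclideanSpace ℝ (Fin n)) (δ : ℝ → (Fin d → ℝ)),
      ContinuousOn δ (Set.Ici 0) → (∀ t : ℝ, 0 ≤ t → δ t ∈ D) →
      (∀ t : ℝ, 0 ≤ t → x t ∈ X ∧ HasDerivAt x (f (x t) lam (δ t)) t) →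
      x 0 = 0 →
      (∀ t : ℝ, 0 ≤ t → ‖x t‖ ≤ νstar + Δ) ∧
      (Δ < Γ - νstar → ∀ t : ℝ, 0 ≤ t → ‖x t‖ < Γ) := by
  intro x δ _ hδD hx hx0
  have hφ₂nonneg : ∀ y, 0 ≤ φ₂ y := fun y => by
    rcases eq_or_ne y 0 with rfl | hy
    · exact hφ₂0.ge
    · exact (hφ₂pos y hy).le
  have hderiv : ∀ t : ℝ, 0 ≤ t → HasDerivAt (fun s => Ψ (x s) lam)
      ⟪gradient (fun y => Ψ y lam) (x t), f (x t) lam (δ t)⟫ t := fun t ht => by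
    have hΨ : HasGradientAt (fun y => Ψ y lam) (gradient (fun y => Ψ y lam) (x t)) (x t) :=
      (((hΨc lam hlam).differentiable one_ne_zero) (x t)).hasGradientAt
    exact hΨ.hasFDerivAt.comp_hasDerivAt t (hx t ht).2
  have hanti : AntitoneOn (fun s => Ψ (x s) lam) (Set.Ici 0) := by
    refine antitoneOn_of_deriv_nonpos (convex_Ici 0)
      (fun t ht => (hderiv t ht).continuousAt.continuousWithinAt)
      (fun t ht => (hderiv t (interior_subset ht)).differentiableAt.differentiableWithinAt)
      (fun t ht => ?_)
    have ht0 : 0 ≤ t := interior_subset ht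
    rw [(hderiv t ht0).deriv]
    exact (hΨdec _ (hx t ht0).1 lam hlam _ (hδD t ht0)).trans (neg_nonpos.2 (hφ₂nonneg _))
  -- The origin is within `Δ` of the equilibrium `x₀ lam 0`, so the trajectory starts in the
  -- sublevel set.
  have hstart : Ψ 0 lam ≤ ζstar :=
    hζstar 0 hX0 0 hD0 (by simpa using hx₀bd lam hlam 0 hD0)
  have hbound : ∀ t : ℝ, 0 ≤ t → ‖x t‖ ≤ νstar + Δ := fun t ht => by
    have hlevel : Ψ (x t) lam ≤ Ψ (x 0) lam := hanti Set.self_mem_Ici ht ht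
    rw [hx0] at hlevel
    have hν := hνstar _ (hx t ht).1 _ (hδD t ht) (hlevel.trans hstart)
    have hΔ := hx₀bd lam hlam _ (hδD t ht)
    have htri := norm_sub_norm_le (x t) (x₀ lam (δ t))
    linarith
  refine ⟨hbound, fun hΓ t ht => ?_⟩
  have := hbound t ht
  linarith
end
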